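/- arXiv:2302.09773 — 6 statements merged into one kernel-verified Lean document; each statement's English description precedes it below -/
import Mathlib

section
/- For every integer s with 1 ≤ s ≤ N and each sign ε0 ∈ {1, −1}, the element g = x11^{2s} + ε0·x12^{2s} of A = A_{Nn}^{μλ} is a group-like element, i.e. Δ(g) = g ⊗ g and ε(g) = 1. -/
/-!
The matrix `(x_{ij})` is multiplicative: `Δ(x_{ij}) = ∑ₗ x_{il} ⊗ x_{lj}` and `ε(x_{ij}) = δ_{ij}`.
Distinct entries of a row annihilate each other, so the terms of this sum are orthogonal and
powers of `Δ(x_{ij})` are taken term by term: the matrix of `m`-th powers of the entries is again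
multiplicative for `m ≥ 1`. For `m = 2s` the relations `x₁₁² = x₂₂²` and `x₁₂² = x₂₁²` give it the
form `(a, b; b, a)`, for which `(1, ε₀)` with `ε₀² = 1` is an eigenvector with eigenvalue
`a + ε₀ b`. An eigenvector of a multiplicative matrix spans a one-dimensional comodule, whose
coefficient, the eigenvalue, is group-like.
-/

open scoped TensorProduct

noncomputable section

/-- The alternating product `x i j * x (i+1) (j+1) * x i j * ⋯` with `m` factors,
    i.e. `χ_{ij}^m` for the Suzuki presentation (indices taken in `Fin 2`). -/
def chi {A : Type*} [Ring A] (x : Fin 2 → Fin 2 → A) : Fin 2 → Fin 2 → ℕ → A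
  | _, _, 0 => 1
  | i, j, (m + 1) => x i j * chi x (i + 1) (j + 1) (m)

/-- A presentation of the Suzuki Hopf algebra `A_{Nn}^{μλ}` over `k`:
`x 0 0 = x₁₁`, `x 0 1 = x₁₂`, `x 1 0 = x₂₁`, `x 1 1 = x₂₂`. -/
structure Suzuki (k A : Type*) [Field k] [CharZero k] [IsAlgClosed k]
    [Ring A] [HopfAlgebra k A] where
  N : ℕ
  n : ℕ
  hN : 1 ≤ N
  hn : 2 ≤ n
  μ : k
  lam : k
  hμ : μ = 1 ∨ μ = -1
  hlam : lam = 1 ∨ lam = -1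
  x : Fin 2 → Fin 2 → A
  gen : Algebra.adjoin k (Set.range fun p : Fin 2 × Fin 2 => x p.1 p.2) = ⊤
  rel_sq1 : x 0 0 ^ 2 = x 1 1 ^ 2
  rel_sq2 : x 0 1 ^ 2 = x 1 0 ^ 2
  rel_chi1 : chi x 1 0 n = lam • chi x 0 1 n
  rel_chi2 : chi x 0 0 n = chi x 1 1 n
  rel_mu : x 0 0 ^ (2 * N) + μ • x 0 1 ^ (2 * N) = 1
  rel_odd : ∀ i j i' j' : Fin 2, Odd ((i : ℕ) + j + i' + j') → x i j * x i' j' = 0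
  comul_chi : ∀ (i j : Fin 2) (m : ℕ), 1 ≤ m →
    Coalgebra.comul (R := k) (chi x i j m)
      = chi x i 0 m ⊗ₜ[k] chi x 0 j m + chi x i 1 m ⊗ₜ[k] chi x 1 j m
  counit_x : ∀ i j : Fin 2,
    Coalgebra.counit (R := k) (x i j) = if i = j then (1 : k) else 0
  antipode_x : ∀ i j : Fin 2,
    HopfAlgebra.antipode (R := k) (x i j) = x j i ^ (4 * N - 1)
  basis_indep : LinearIndependent k (fun p : Fin 2 × Fin (2 * N) × Fin n =>
      if p.1 = 0 then x 0 0 ^ ((p.2.1 : ℕ) + 1) * chi x 1 1 (p.2.2 : ℕ)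
      else x 0 1 ^ ((p.2.1 : ℕ) + 1) * chi x 1 0 (p.2.2 : ℕ))
  basis_span : Submodule.span k (Set.range fun p : Fin 2 × Fin (2 * N) × Fin n =>
      if p.1 = 0 then x 0 0 ^ ((p.2.1 : ℕ) + 1) * chi x 1 1 (p.2.2 : ℕ)
      else x 0 1 ^ ((p.2.1 : ℕ) + 1) * chi x 1 0 (p.2.2 : ℕ)) = ⊤

/-- A Hopf algebra automorphism of `A`: a bijective `k`-linear map `A → A` that is
both an algebra homomorphism and a coalgebra homomorphism. -/
def IsHopfAut (k : Type*) {A : Type*} [Field k] [Ring A] [HopfAlgebra k A]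
    (ψ : A ≃ₗ[k] A) : Prop :=
  (∀ a b : A, ψ (a * b) = ψ a * ψ b) ∧ ψ 1 = 1 ∧
  (∀ a : A, Coalgebra.comul (R := k) (ψ a)
      = TensorProduct.map ψ.toLinearMap ψ.toLinearMap (Coalgebra.comul (R := k) a)) ∧
  (∀ a : A, Coalgebra.counit (R := k) (ψ a) = Coalgebra.counit (R := k) a)

lemma sum_pow_of_pairwise_mul_eq_zero {ι B : Type*} [Fintype ι] [Semiring B] {f : ι → B}
    (hf : Pairwise fun i j => f i * f j = 0) {m : ℕ} (hm : m ≠ 0) :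
    (∑ i, f i) ^ m = ∑ i, f i ^ m := by
  induction m with
  | zero => exact absurd rfl hm
  | succ m ih =>
    obtain rfl | hm := eq_or_ne m 0
    · simp only [zero_add, pow_one]
    have pow_mul_eq_zero (i j : ι) (hij : j ≠ i) : f i ^ m * f j = 0 := by
      rw [← pow_sub_one_mul hm, mul_assoc, hf hij.symm, mul_zero]
    calc (∑ i, f i) ^ (m + 1) = ∑ i, ∑ j, f i ^ m * f j := by
          rw [pow_succ, ih hm, Finset.sum_mul_sum]
      _ = ∑ i, f i ^ (m + 1) := Finset.sum_congr rfl fun i _ => by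
          rw [pow_succ, Fintype.sum_eq_single i (pow_mul_eq_zero i)]

/-- A multiplicative matrix over a coalgebra: the coefficients of a right comodule structure
`e j ↦ ∑ l, e l ⊗ x l j` on `ι → R`. The generators of a Suzuki Hopf algebra form one, and
group-like elements arise as eigenvalues of such matrices. -/
structure IsMultiplicativeMatrix (R : Type*) {ι A : Type*} [Fintype ι] [DecidableEq ι]
    [CommSemiring R] [AddCommMonoid A] [Module R A] [Coalgebra R A] (x : Matrix ι ι A) : Prop where
  comul_apply (i j : ι) : Coalgebra.comul (R := R) (x i j) = ∑ l, x i l ⊗ₜ[R] x l j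
  counit_apply (i j : ι) : Coalgebra.counit (R := R) (x i j) = (1 : Matrix ι ι R) i j

namespace IsMultiplicativeMatrix

variable {R ι A : Type*} [Fintype ι] [DecidableEq ι] [CommSemiring R]

lemma isGroupLikeElem_of_eigenvector [AddCommMonoid A] [Module R A] [Coalgebra R A]
    {x : Matrix ι ι A} (hx : IsMultiplicativeMatrix R x) {v : ι → R} {g : A}
    (hv : ∀ i, ∑ j, v j • x i j = v i • g) {i : ι} (hi : v i = 1) : IsGroupLikeElem R g where
  counit_eq_one := by
    calc Coalgebra.counit (R := R) g = Coalgebra.counit (R := R) (∑ j, v j • x i j) := by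
          rw [hv, hi, one_smul]
      _ = ∑ j, v j * (1 : Matrix ι ι R) i j := by
          simp only [map_sum, map_smul, hx.counit_apply, smul_eq_mul]
      _ = 1 := by simp [Matrix.one_apply, hi]
  comul_eq_tmul_self := by
    calc Coalgebra.comul (R := R) g = Coalgebra.comul (R := R) (∑ j, v j • x i j) := by
          rw [hv, hi, one_smul]
      _ = ∑ l, x i l ⊗ₜ[R] ∑ j, v j • x l j := by
          simp only [map_sum, map_smul, hx.comul_apply, Finset.smul_sum, TensorProduct.tmul_sum,
            TensorProduct.tmul_smul]
          exact Finset.sum_comm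
      _ = (∑ l, v l • x i l) ⊗ₜ[R] g := by
          rw [TensorProduct.sum_tmul]
          simp only [hv, TensorProduct.smul_tmul]
      _ = g ⊗ₜ[R] g := by rw [hv, hi, one_smul]

lemma map_pow [Semiring A] [Bialgebra R A] {x : Matrix ι ι A} (hx : IsMultiplicativeMatrix R x)
    (hrow : ∀ i, Pairwise fun j l => x i j * x i l = 0) {m : ℕ} (hm : m ≠ 0) :
    IsMultiplicativeMatrix R (x.map (· ^ m)) where
  comul_apply i j := by
    have orthogonal : Pairwise fun l l' => x i l ⊗ₜ[R] x l j * x i l' ⊗ₜ[R] x l' j = 0 :=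
      fun l l' hl => (Algebra.TensorProduct.tmul_mul_tmul ..).trans <| by
        rw [hrow i hl, TensorProduct.zero_tmul]
    simp only [Matrix.map_apply, Bialgebra.comul_pow, hx.comul_apply,
      sum_pow_of_pairwise_mul_eq_zero orthogonal hm, Algebra.TensorProduct.tmul_pow]
  counit_apply i j := by
    rw [Matrix.map_apply, Bialgebra.counit_pow, hx.counit_apply, Matrix.one_apply]
    split_ifs <;> simp [hm]

end IsMultiplicativeMatrix

theorem stmt1_general {R A : Type*} [CommSemiring R] [Semiring A] [Bialgebra R A]
    {x : Matrix (Fin 2) (Fin 2) A} (hx : IsMultiplicativeMatrix R x)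
    (hrow : ∀ i, Pairwise fun j l => x i j * x i l = 0)
    (hdiag : x 0 0 ^ 2 = x 1 1 ^ 2) (hoff : x 0 1 ^ 2 = x 1 0 ^ 2)
    {s : ℕ} (hs : s ≠ 0) {ε : R} (hε : ε * ε = 1) :
    IsGroupLikeElem R (x 0 0 ^ (2 * s) + ε • x 0 1 ^ (2 * s)) := by
  have eigenvector (i : Fin 2) : ∑ j, ![1, ε] j • x.map (· ^ (2 * s)) i j
      = ![1, ε] i • (x 0 0 ^ (2 * s) + ε • x 0 1 ^ (2 * s)) := by
    fin_cases i
    · simp [Fin.sum_univ_two]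
    · simp [Fin.sum_univ_two, pow_mul, ← hdiag, ← hoff, smul_smul, hε, add_comm]
  exact (hx.map_pow hrow (mul_ne_zero two_ne_zero hs)).isGroupLikeElem_of_eigenvector
    eigenvector (i := 0) rfl

namespace Suzuki

variable {k A : Type*} [Field k] [CharZero k] [IsAlgClosed k] [Ring A] [HopfAlgebra k A]

lemma isMultiplicativeMatrix (S : Suzuki k A) : IsMultiplicativeMatrix k (Matrix.of S.x) where
  comul_apply i j := by simpa [chi, Fin.sum_univ_two] using S.comul_chi i j 1 le_rfl
  counit_apply i j := by rw [Matrix.of_apply, S.counit_x, Matrix.one_apply]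

lemma pairwise_row_mul_eq_zero (S : Suzuki k A) (i : Fin 2) :
    Pairwise fun j l => S.x i j * S.x i l = 0 := fun j l hjl =>
  S.rel_odd i j i l (by revert i j l; decide)

end Suzuki

/-- `g = x₁₁^{2s} + ε₀ x₁₂^{2s}` is group-like for `1 ≤ s ≤ N`, `ε₀ = ±1`. -/
theorem stmt1 (k A : Type*) [Field k] [CharZero k] [IsAlgClosed k]
    [Ring A] [HopfAlgebra k A] (S : Suzuki k A)
    (s : ℕ) (hs1 : 1 ≤ s) (hs2 : s ≤ S.N) (ε0 : k) (hε0 : ε0 = 1 ∨ ε0 = -1) :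
    Coalgebra.comul (R := k) (S.x 0 0 ^ (2 * s) + ε0 • S.x 0 1 ^ (2 * s))
      = (S.x 0 0 ^ (2 * s) + ε0 • S.x 0 1 ^ (2 * s))
          ⊗ₜ[k] (S.x 0 0 ^ (2 * s) + ε0 • S.x 0 1 ^ (2 * s))
    ∧ Coalgebra.counit (R := k) (S.x 0 0 ^ (2 * s) + ε0 • S.x 0 1 ^ (2 * s)) = 1 := by
  have h := stmt1_general S.isMultiplicativeMatrix S.pairwise_row_mul_eq_zero S.rel_sq1 S.rel_sq2
    (Nat.one_le_iff_ne_zero.1 hs1) (mul_self_eq_one_iff.2 hε0)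
  exact ⟨h.comul_eq_tmul_self, h.counit_eq_one⟩
end
end

section
/- Assume n = 2m + 1 is odd and let ω ∈ k satisfy ω² = λ. For every integer s with 1 ≤ s ≤ N and each sign ε0 ∈ {1, −1}, the element h = x11^{2s+1}·χ22^{n−1} + ε0·ω·x12^{2s+1}·χ21^{n−1} of A = A_{Nn}^{μλ} is group-like, i.e. Δ(h) = h ⊗ h and ε(h) = 1. -/
/-!
A matrix `u` over a coalgebra is multiplicative if `Δ(uᵢⱼ) = ∑ₖ uᵢₖ ⊗ uₖⱼ` and `ε(uᵢⱼ) = δᵢⱼ`. If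
`u w = g w` for a vector `w` of scalars with some coordinate equal to `1`, then `g` is group-like.
In a bialgebra the entrywise product of two multiplicative matrices is again multiplicative as soon
as the mixed products `uᵢₖ vᵢₗ`, `k ≠ l`, vanish. In the Suzuki algebra the parity relation provides
this vanishing, so `Uᵢⱼ = xᵢⱼ²ˢ χᵢⱼⁿ` is a multiplicative matrix, and the remaining relations say
`U₂₂ = U₁₁` and `U₂₁ = λ U₁₂`. For `e² = λ` the vector `(1, e)` is therefore an eigenvector, with
eigenvalue `U₁₁ + e U₁₂ = h`.
-/

open scoped TensorProduct

noncomputable section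

/-- A multiplicative matrix over a coalgebra: its entries are the matrix coefficients of a
comodule with basis indexed by `ι`. It turns group-likeness of an element into an eigenvector
equation. -/
structure IsMultiplicativeMatrix_s2 (R : Type*) {ι C : Type*} [Fintype ι] [DecidableEq ι]
    [CommSemiring R] [AddCommMonoid C] [Module R C] [Coalgebra R C] (u : Matrix ι ι C) : Prop where
  comul_apply : ∀ i j, Coalgebra.comul (R := R) (u i j) = ∑ k, u i k ⊗ₜ[R] u k j
  counit_apply : ∀ i j, Coalgebra.counit (R := R) (u i j) = if i = j then 1 else 0

namespace IsMultiplicativeMatrix_s2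

variable {R ι : Type*} [CommSemiring R] [Fintype ι] [DecidableEq ι]

lemma isGroupLikeElem_of_eigenvector_s2 {C : Type*} [AddCommMonoid C] [Module R C] [Coalgebra R C]
    {u : Matrix ι ι C} (hu : IsMultiplicativeMatrix_s2 R u) {w : ι → R} {g : C}
    (hw : ∀ i, ∑ j, w j • u i j = w i • g) {i : ι} (hi : w i = 1) : IsGroupLikeElem R g := by
  have hg : ∑ j, w j • u i j = g := by rw [hw, hi, one_smul]
  constructor
  · calc Coalgebra.counit (R := R) g = Coalgebra.counit (R := R) (∑ j, w j • u i j) := by rw [hg]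
      _ = 1 := by simp [hu.counit_apply, hi]
  · calc Coalgebra.comul (R := R) g
        = ∑ j, w j • ∑ k, u i k ⊗ₜ[R] u k j := by
          rw [← hg]; simp only [map_sum, map_smul, hu.comul_apply]
      _ = ∑ k, u i k ⊗ₜ[R] ∑ j, w j • u k j := by
          simp only [Finset.smul_sum, TensorProduct.tmul_sum, TensorProduct.tmul_smul]
          exact Finset.sum_comm
      _ = (∑ k, w k • u i k) ⊗ₜ[R] g := by
          rw [TensorProduct.sum_tmul]
          simp only [hw, TensorProduct.smul_tmul]
      _ = g ⊗ₜ[R] g := by rw [hg]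

variable {B : Type*} [Semiring B] [Bialgebra R B] {u v : Matrix ι ι B}

lemma hadamard (hu : IsMultiplicativeMatrix_s2 R u) (hv : IsMultiplicativeMatrix_s2 R v)
    (huv : ∀ i k l, k ≠ l → u i k * v i l = 0) : IsMultiplicativeMatrix_s2 R (u.hadamard v) where
  comul_apply i j := by
    have off_diag (k l : ι) (hkl : l ≠ k) : (u i k * v i l) ⊗ₜ[R] (u k j * v l j) = 0 := by
      rw [huv i k l hkl.symm, TensorProduct.zero_tmul]
    simp only [Matrix.hadamard_apply, Bialgebra.comul_mul, hu.comul_apply, hv.comul_apply,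
      Finset.sum_mul_sum, Algebra.TensorProduct.tmul_mul_tmul]
    exact Finset.sum_congr rfl fun k _ => Fintype.sum_eq_single k (off_diag k)
  counit_apply i j := by
    by_cases hij : i = j <;> simp [hu.counit_apply, hv.counit_apply, hij]

lemma map_pow_hadamard (hu : IsMultiplicativeMatrix_s2 R u) (hv : IsMultiplicativeMatrix_s2 R v)
    (huu : ∀ i k l, k ≠ l → u i k * u i l = 0) (huv : ∀ i k l, k ≠ l → u i k * v i l = 0) (r : ℕ) :
    IsMultiplicativeMatrix_s2 R ((u.map (· ^ r)).hadamard v) := by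
  induction r with
  | zero =>
    convert hv using 1
    ext i j
    simp
  | succ r ih =>
    have orth (i k l : ι) (hkl : k ≠ l) : u i k * (u.map (· ^ r)).hadamard v i l = 0 := by
      cases r with
      | zero => simpa using huv i k l hkl
      | succ r => simp [pow_succ', ← mul_assoc, huu i k l hkl]
    convert hu.hadamard ih orth using 1
    ext i j
    simp [pow_succ', mul_assoc]

end IsMultiplicativeMatrix_s2

lemma pow_succ_mul_chi {A : Type*} [Ring A] (x : Fin 2 → Fin 2 → A) (i j : Fin 2) (r t : ℕ) :
    x i j ^ (r + 1) * chi x (i + 1) (j + 1) t = x i j ^ r * chi x i j (t + 1) := by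
  rw [pow_succ, mul_assoc, chi]

namespace Suzuki

variable {k A : Type*} [Field k] [CharZero k] [IsAlgClosed k] [Ring A] [HopfAlgebra k A]
  (S : Suzuki k A)

lemma x_mul_x_of_ne (i : Fin 2) {j l : Fin 2} (hjl : j ≠ l) : S.x i j * S.x i l = 0 := by
  refine S.rel_odd i j i l ?_
  revert i j l
  decide

lemma x_mul_chi_of_ne (i : Fin 2) {j l : Fin 2} (hjl : j ≠ l) {t : ℕ} (ht : t ≠ 0) :
    S.x i j * chi S.x i l t = 0 := by
  obtain ⟨t, rfl⟩ := Nat.exists_eq_succ_of_ne_zero ht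
  rw [chi, ← mul_assoc, S.x_mul_x_of_ne i hjl, zero_mul]

lemma counit_chi_succ (i j : Fin 2) (t : ℕ) :
    Coalgebra.counit (R := k) (chi S.x i j (t + 1)) = if i = j then 1 else 0 := by
  induction t generalizing i j with
  | zero => simp [chi, S.counit_x]
  | succ t ih => rw [chi, Bialgebra.counit_mul, S.counit_x, ih]; simp

lemma isMultiplicativeMatrix_chi {t : ℕ} (ht : t ≠ 0) :
    IsMultiplicativeMatrix_s2 k (Matrix.of fun i j => chi S.x i j t) where
  comul_apply i j := by simpa using S.comul_chi i j t (Nat.one_le_iff_ne_zero.mpr ht)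
  counit_apply i j := by
    obtain ⟨t, rfl⟩ := Nat.exists_eq_succ_of_ne_zero ht
    exact S.counit_chi_succ i j t

lemma isMultiplicativeMatrix_x : IsMultiplicativeMatrix_s2 k (Matrix.of S.x) := by
  simpa [chi] using S.isMultiplicativeMatrix_chi one_ne_zero

lemma isMultiplicativeMatrix_pow_mul_chi (r : ℕ) {t : ℕ} (ht : t ≠ 0) :
    IsMultiplicativeMatrix_s2 k (Matrix.of fun i j => S.x i j ^ r * chi S.x i j t) :=
  S.isMultiplicativeMatrix_x.map_pow_hadamard (S.isMultiplicativeMatrix_chi ht)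
    (fun i _ _ hjl => S.x_mul_x_of_ne i hjl) (fun i _ _ hjl => S.x_mul_chi_of_ne i hjl ht) r

lemma pow_mul_chi_one_one (s : ℕ) :
    S.x 1 1 ^ (2 * s) * chi S.x 1 1 S.n = S.x 0 0 ^ (2 * s) * chi S.x 0 0 S.n := by
  rw [pow_mul, pow_mul, S.rel_sq1, S.rel_chi2]

lemma pow_mul_chi_one_zero (s : ℕ) :
    S.x 1 0 ^ (2 * s) * chi S.x 1 0 S.n = S.lam • (S.x 0 1 ^ (2 * s) * chi S.x 0 1 S.n) := by
  rw [pow_mul, pow_mul, S.rel_sq2, S.rel_chi1, mul_smul_comm]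

end Suzuki

theorem stmt2_general {k A : Type*} [Field k] [CharZero k] [IsAlgClosed k] [Ring A]
    [HopfAlgebra k A] (S : Suzuki k A) {e : k} (he : e ^ 2 = S.lam) (s : ℕ) :
    IsGroupLikeElem k (S.x 0 0 ^ (2 * s + 1) * chi S.x 1 1 (S.n - 1)
      + e • (S.x 0 1 ^ (2 * s + 1) * chi S.x 1 0 (S.n - 1))) := by
  have hn : S.n ≠ 0 := (two_pos.trans_le S.hn).ne'
  have h_diag : S.x 0 0 ^ (2 * s + 1) * chi S.x 1 1 (S.n - 1)
      = S.x 0 0 ^ (2 * s) * chi S.x 0 0 S.n := by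
    simpa [Nat.sub_one_add_one hn] using pow_succ_mul_chi S.x 0 0 (2 * s) (S.n - 1)
  have h_off : S.x 0 1 ^ (2 * s + 1) * chi S.x 1 0 (S.n - 1)
      = S.x 0 1 ^ (2 * s) * chi S.x 0 1 S.n := by
    simpa [Nat.sub_one_add_one hn] using pow_succ_mul_chi S.x 0 1 (2 * s) (S.n - 1)
  rw [h_diag, h_off]
  refine (S.isMultiplicativeMatrix_pow_mul_chi (2 * s) hn).isGroupLikeElem_of_eigenvector_s2
    (w := ![1, e]) (Fin.forall_fin_two.mpr ⟨?_, ?_⟩) (i := 0) rfl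
  · simp
  · simp only [Fin.sum_univ_two, Matrix.of_apply, Matrix.cons_val_zero, Matrix.cons_val_one,
      one_smul, S.pow_mul_chi_one_zero, S.pow_mul_chi_one_one, ← he]
    module

/-- for odd `n = 2m+1`, `ω² = λ`, `1 ≤ s ≤ N`, `ε₀ = ±1`, the element
`h = x₁₁^{2s+1} χ₂₂^{n-1} + ε₀ ω x₁₂^{2s+1} χ₂₁^{n-1}` is group-like. -/
theorem stmt2 (k A : Type*) [Field k] [CharZero k] [IsAlgClosed k]
    [Ring A] [HopfAlgebra k A] (S : Suzuki k A)
    (m : ℕ) (hm : S.n = 2 * m + 1) (ω : k) (hω : ω ^ 2 = S.lam)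
    (s : ℕ) (hs1 : 1 ≤ s) (hs2 : s ≤ S.N) (ε0 : k) (hε0 : ε0 = 1 ∨ ε0 = -1) :
    Coalgebra.comul (R := k)
        (S.x 0 0 ^ (2 * s + 1) * chi S.x 1 1 (S.n - 1)
          + (ε0 * ω) • (S.x 0 1 ^ (2 * s + 1) * chi S.x 1 0 (S.n - 1)))
      = (S.x 0 0 ^ (2 * s + 1) * chi S.x 1 1 (S.n - 1)
          + (ε0 * ω) • (S.x 0 1 ^ (2 * s + 1) * chi S.x 1 0 (S.n - 1)))
        ⊗ₜ[k]
        (S.x 0 0 ^ (2 * s + 1) * chi S.x 1 1 (S.n - 1)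
          + (ε0 * ω) • (S.x 0 1 ^ (2 * s + 1) * chi S.x 1 0 (S.n - 1)))
    ∧ Coalgebra.counit (R := k)
        (S.x 0 0 ^ (2 * s + 1) * chi S.x 1 1 (S.n - 1)
          + (ε0 * ω) • (S.x 0 1 ^ (2 * s + 1) * chi S.x 1 0 (S.n - 1))) = 1 := by
  have hg := stmt2_general S (e := ε0 * ω) (by rw [mul_pow, sq_eq_one_iff.mpr hε0, one_mul, hω]) s
  exact ⟨hg.comul_eq_tmul_self, hg.counit_eq_one⟩
end
end

section
/- Assume n = 2m is even and let ω ∈ k satisfy ω² = λ. For every integer s with 1 ≤ s ≤ N and each sign ε0 ∈ {1, −1}, the element h = x11^{2s}·χ11^{n} + ε0·ω·x12^{2s}·χ12^{n} of A = A_{Nn}^{μλ} is group-like, i.e. Δ(h) = h ⊗ h and ε(h) = 1. -/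
open scoped TensorProduct

noncomputable section

/-!
The functionals on `R[X] ⧸ (X² - c)` dual to the basis `1, X` span a coalgebra in which
`Δ u = u ⊗ u + c v ⊗ v` and `Δ v = u ⊗ v + v ⊗ u`, and whose group-like elements, the algebra
homomorphisms to `R`, are the `u + t v` with `t² = c`. In `A`, the pair `(x₁₁², x₁₂²)` comultiplies
in this way with `c = 1`, and `(χ₁₁ⁿ, χ₁₂ⁿ)` does so with `c = λ`. As `x₁₁` and `x₁₂` annihilate each
other, cross terms vanish when such pairs are multiplied entrywise, and the parameters `c` multiply.
-/

/-- The pair `(u, v)` comultiplies like the basis dual to `1, X` of `R[X] ⧸ (X² - c)`. Linear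
independence is not required, so this says that `1* ↦ u`, `X* ↦ v` is a coalgebra map from the
dual of `R[X] ⧸ (X² - c)`. -/
structure IsQuadraticDualPair {R A : Type*} [CommSemiring R] [AddCommMonoid A] [Module R A]
    [Coalgebra R A] (c : R) (u v : A) : Prop where
  comul_fst : Coalgebra.comul (R := R) u = u ⊗ₜ[R] u + c • (v ⊗ₜ[R] v)
  comul_snd : Coalgebra.comul (R := R) v = u ⊗ₜ[R] v + v ⊗ₜ[R] u
  counit_fst : Coalgebra.counit (R := R) u = 1
  counit_snd : Coalgebra.counit (R := R) v = 0

namespace IsQuadraticDualPair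

theorem isGroupLikeElem_add_smul {R A : Type*} [CommSemiring R] [AddCommMonoid A] [Module R A]
    [Coalgebra R A] {c t : R} {u v : A} (h : IsQuadraticDualPair c u v) (ht : t ^ 2 = c) :
    IsGroupLikeElem R (u + t • v) where
  counit_eq_one := by rw [map_add, map_smul, h.counit_fst, h.counit_snd, smul_zero, add_zero]
  comul_eq_tmul_self := by
    rw [map_add, map_smul, h.comul_fst, h.comul_snd, ← ht, pow_two]
    simp only [TensorProduct.add_tmul, TensorProduct.tmul_add, TensorProduct.tmul_smul,
      ← TensorProduct.smul_tmul', smul_add, smul_smul]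
    abel

variable {R A : Type*} [CommSemiring R] [Semiring A] [Bialgebra R A] {c c' : R} {u v u' v' : A}

theorem mul (h : IsQuadraticDualPair c u v) (h' : IsQuadraticDualPair c' u' v')
    (huv : u * v' = 0) (hvu : v * u' = 0) :
    IsQuadraticDualPair (c * c') (u * u') (v * v') where
  comul_fst := by
    rw [Bialgebra.comul_mul, h.comul_fst, h'.comul_fst]
    simp only [add_mul, mul_add, smul_mul_assoc, mul_smul_comm,
      Algebra.TensorProduct.tmul_mul_tmul, huv, hvu, TensorProduct.zero_tmul, smul_zero, add_zero,
      zero_add, smul_smul, mul_comm c']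
  comul_snd := by
    rw [Bialgebra.comul_mul, h.comul_snd, h'.comul_snd]
    simp only [add_mul, mul_add, Algebra.TensorProduct.tmul_mul_tmul, huv, hvu,
      TensorProduct.zero_tmul, add_zero, zero_add]
  counit_fst := by rw [Bialgebra.counit_mul, h.counit_fst, h'.counit_fst, mul_one]
  counit_snd := by rw [Bialgebra.counit_mul, h.counit_snd, zero_mul]

theorem pow (h : IsQuadraticDualPair c u v) (huv : u * v = 0) (hvu : v * u = 0) {s : ℕ}
    (hs : s ≠ 0) : IsQuadraticDualPair (c ^ s) (u ^ s) (v ^ s) := by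
  obtain ⟨r, rfl⟩ := Nat.exists_eq_succ_of_ne_zero hs
  induction r with
  | zero => simpa only [Nat.succ_eq_add_one, zero_add, pow_one] using h
  | succ r ih =>
    have huv' : u ^ (r + 1) * v = 0 := by rw [pow_succ, mul_assoc, huv, mul_zero]
    have hvu' : v ^ (r + 1) * u = 0 := by rw [pow_succ, mul_assoc, hvu, mul_zero]
    simpa only [pow_succ] using (ih r.succ_ne_zero).mul h huv' hvu'

end IsQuadraticDualPair

namespace Suzuki

variable {k A : Type*} [Field k] [CharZero k] [IsAlgClosed k] [Ring A] [HopfAlgebra k A]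
  (S : Suzuki k A)

theorem comul_x (i j : Fin 2) :
    Coalgebra.comul (R := k) (S.x i j) = S.x i 0 ⊗ₜ[k] S.x 0 j + S.x i 1 ⊗ₜ[k] S.x 1 j := by
  simpa only [chi, mul_one] using S.comul_chi i j 1 le_rfl

theorem comul_x_sq (i j : Fin 2) :
    Coalgebra.comul (R := k) (S.x i j ^ 2)
      = (S.x i 0 ^ 2) ⊗ₜ[k] (S.x 0 j ^ 2) + (S.x i 1 ^ 2) ⊗ₜ[k] (S.x 1 j ^ 2) := by
  have h01 : S.x i 0 * S.x i 1 = 0 := S.rel_odd i 0 i 1 (by fin_cases i <;> decide)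
  have h10 : S.x i 1 * S.x i 0 = 0 := S.rel_odd i 1 i 0 (by fin_cases i <;> decide)
  simp only [pow_two, Bialgebra.comul_mul, comul_x, add_mul, mul_add,
    Algebra.TensorProduct.tmul_mul_tmul, h01, h10, TensorProduct.zero_tmul, add_zero, zero_add]

theorem counit_chi_diag (i : Fin 2) (l : ℕ) :
    Coalgebra.counit (R := k) (chi S.x i i l) = 1 := by
  induction l generalizing i with
  | zero => exact Bialgebra.counit_one
  | succ l ih => rw [chi, Bialgebra.counit_mul, ih, S.counit_x, if_pos rfl, mul_one]

theorem counit_chi_of_ne {i j : Fin 2} (hij : i ≠ j) {l : ℕ} (hl : l ≠ 0) :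
    Coalgebra.counit (R := k) (chi S.x i j l) = 0 := by
  obtain ⟨l, rfl⟩ := Nat.exists_eq_succ_of_ne_zero hl
  rw [chi, Bialgebra.counit_mul, S.counit_x, if_neg hij, zero_mul]

theorem x_pow_mul_x_pow_eq_zero {i j i' j' : Fin 2} (h : Odd ((i : ℕ) + j + i' + j')) {r l : ℕ}
    (hr : r ≠ 0) (hl : l ≠ 0) : S.x i j ^ r * S.x i' j' ^ l = 0 := by
  rw [← pow_sub_one_mul hr, ← mul_pow_sub_one hl, mul_assoc, ← mul_assoc (S.x i j),
    S.rel_odd i j i' j' h, zero_mul, mul_zero]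

theorem x_pow_mul_chi_eq_zero {i j i' j' : Fin 2} (h : Odd ((i : ℕ) + j + i' + j')) {r l : ℕ}
    (hr : r ≠ 0) (hl : l ≠ 0) : S.x i j ^ r * chi S.x i' j' l = 0 := by
  obtain ⟨l, rfl⟩ := Nat.exists_eq_succ_of_ne_zero hl
  rw [chi, ← pow_sub_one_mul hr, mul_assoc, ← mul_assoc (S.x i j), S.rel_odd i j i' j' h, zero_mul,
    mul_zero]

theorem isQuadraticDualPair_x_sq : IsQuadraticDualPair (1 : k) (S.x 0 0 ^ 2) (S.x 0 1 ^ 2) where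
  comul_fst := by rw [comul_x_sq, ← S.rel_sq2, one_smul]
  comul_snd := by rw [comul_x_sq, ← S.rel_sq1]
  counit_fst := by rw [Bialgebra.counit_pow, S.counit_x, if_pos rfl, one_pow]
  counit_snd := by rw [Bialgebra.counit_pow, S.counit_x, if_neg zero_ne_one, zero_pow two_ne_zero]

theorem isQuadraticDualPair_x_pow {s : ℕ} (hs : s ≠ 0) :
    IsQuadraticDualPair (1 : k) (S.x 0 0 ^ (2 * s)) (S.x 0 1 ^ (2 * s)) := by
  have h01 : S.x 0 0 ^ 2 * S.x 0 1 ^ 2 = 0 :=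
    S.x_pow_mul_x_pow_eq_zero (by decide) two_ne_zero two_ne_zero
  have h10 : S.x 0 1 ^ 2 * S.x 0 0 ^ 2 = 0 :=
    S.x_pow_mul_x_pow_eq_zero (by decide) two_ne_zero two_ne_zero
  simpa only [one_pow, ← pow_mul] using S.isQuadraticDualPair_x_sq.pow h01 h10 hs

theorem n_ne_zero : S.n ≠ 0 := Nat.ne_zero_of_lt S.hn

theorem isQuadraticDualPair_chi :
    IsQuadraticDualPair S.lam (chi S.x 0 0 S.n) (chi S.x 0 1 S.n) where
  comul_fst := by
    rw [S.comul_chi 0 0 _ (Nat.one_le_iff_ne_zero.mpr S.n_ne_zero), S.rel_chi1,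
      TensorProduct.tmul_smul]
  comul_snd := by
    rw [S.comul_chi 0 1 _ (Nat.one_le_iff_ne_zero.mpr S.n_ne_zero), ← S.rel_chi2]
  counit_fst := S.counit_chi_diag 0 S.n
  counit_snd := S.counit_chi_of_ne zero_ne_one S.n_ne_zero

theorem isQuadraticDualPair_x_pow_mul_chi (s : ℕ) :
    IsQuadraticDualPair S.lam (S.x 0 0 ^ (2 * s) * chi S.x 0 0 S.n)
      (S.x 0 1 ^ (2 * s) * chi S.x 0 1 S.n) := by
  rcases eq_or_ne s 0 with rfl | hs
  · simpa only [mul_zero, pow_zero, one_mul] using S.isQuadraticDualPair_chi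
  · have h2s : 2 * s ≠ 0 := mul_ne_zero two_ne_zero hs
    simpa only [one_mul] using (S.isQuadraticDualPair_x_pow hs).mul S.isQuadraticDualPair_chi
      (S.x_pow_mul_chi_eq_zero (by decide) h2s S.n_ne_zero)
      (S.x_pow_mul_chi_eq_zero (by decide) h2s S.n_ne_zero)

end Suzuki

theorem stmt3_general {k A : Type*} [Field k] [CharZero k] [IsAlgClosed k] [Ring A]
    [HopfAlgebra k A] (S : Suzuki k A) (s : ℕ) {t : k} (ht : t ^ 2 = S.lam) :
    IsGroupLikeElem k (S.x 0 0 ^ (2 * s) * chi S.x 0 0 S.n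
      + t • (S.x 0 1 ^ (2 * s) * chi S.x 0 1 S.n)) :=
  (S.isQuadraticDualPair_x_pow_mul_chi s).isGroupLikeElem_add_smul ht

/-- for even `n = 2m`, `ω² = λ`, `1 ≤ s ≤ N`, `ε₀ = ±1`, the element
`h = x₁₁^{2s} χ₁₁^{n} + ε₀ ω x₁₂^{2s} χ₁₂^{n}` is group-like. -/
theorem stmt3 (k A : Type*) [Field k] [CharZero k] [IsAlgClosed k]
    [Ring A] [HopfAlgebra k A] (S : Suzuki k A)
    (m : ℕ) (hm : S.n = 2 * m) (ω : k) (hω : ω ^ 2 = S.lam)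
    (s : ℕ) (hs1 : 1 ≤ s) (hs2 : s ≤ S.N) (ε0 : k) (hε0 : ε0 = 1 ∨ ε0 = -1) :
    Coalgebra.comul (R := k)
        (S.x 0 0 ^ (2 * s) * chi S.x 0 0 S.n
          + (ε0 * ω) • (S.x 0 1 ^ (2 * s) * chi S.x 0 1 S.n))
      = (S.x 0 0 ^ (2 * s) * chi S.x 0 0 S.n
          + (ε0 * ω) • (S.x 0 1 ^ (2 * s) * chi S.x 0 1 S.n))
        ⊗ₜ[k]
        (S.x 0 0 ^ (2 * s) * chi S.x 0 0 S.n
          + (ε0 * ω) • (S.x 0 1 ^ (2 * s) * chi S.x 0 1 S.n))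
    ∧ Coalgebra.counit (R := k)
        (S.x 0 0 ^ (2 * s) * chi S.x 0 0 S.n
          + (ε0 * ω) • (S.x 0 1 ^ (2 * s) * chi S.x 0 1 S.n)) = 1 := by
  have h := stmt3_general S s (t := ε0 * ω) (by rw [mul_pow, sq_eq_one_iff.mpr hε0, one_mul, hω])
  exact ⟨h.comul_eq_tmul_self, h.counit_eq_one⟩
end
end

section
/- Assume n is even. For every Hopf algebra automorphism ψ of A = A_{Nn}^{μλ} there exist integers s, t with 1 ≤ s ≤ N and 1 ≤ t ≤ n − 1 such that ψ(C_{N1}) = C_{st}, where C_{N1} is the k-linear span of {x11, x12, x21, x22}. -/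
/-!
A simple subcoalgebra `D` contained in a finite sum of subcoalgebras is contained in one of the
summands: if `D ∩ V = 0`, pick a functional `f` equal to the counit on `D` and zero on `V`; the
slice `a ↦ ∑ a₁ f(a₂)` is the identity on `D`, kills `V` and preserves every subcoalgebra, so
`D ⊆ V + W` forces `D ⊆ W`.

A `2 × 2` comatrix with linearly independent entries spans a simple subcoalgebra of dimension 4,
and the image of `C_{N1}` under an injective coalgebra map is of this kind. The subcoalgebras
`C_{mt}` with `1 ≤ m ≤ N` and `0 ≤ t ≤ n` span `A`, so the image lies in one of them. They have
dimension at most 4, and at most 2 when `t = 0` or `t = n`, where the entries in the second row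
are proportional to those in the first. Hence `1 ≤ t ≤ n - 1` and the image is all of `C_{mt}`.
-/

open scoped TensorProduct

noncomputable section

open Coalgebra Module

section Subcoalgebra

variable {R C : Type*} [CommSemiring R] [AddCommMonoid C] [Module R C] [Coalgebra R C]

/-- The left slice `a ↦ ∑ f(a₁) a₂` of the comultiplication by a functional `f`. -/
def leftSlice (f : C →ₗ[R] R) : C →ₗ[R] C :=
  (TensorProduct.lid R C).toLinearMap ∘ₗ f.rTensor C ∘ₗ comul

/-- The right slice `a ↦ ∑ a₁ f(a₂)` of the comultiplication by a functional `f`. -/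
def rightSlice (f : C →ₗ[R] R) : C →ₗ[R] C :=
  (TensorProduct.rid R C).toLinearMap ∘ₗ f.lTensor C ∘ₗ comul

theorem rightSlice_counit (a : C) : rightSlice (counit (R := R)) a = a := by
  simp [rightSlice]

theorem rightSlice_zero (a : C) : rightSlice (0 : C →ₗ[R] R) a = 0 := by
  simp [rightSlice]

/-- `W` is a subcoalgebra, that is, `Δ(W) ⊆ W ⊗ W`, the right-hand side being read as the image
of `W ⊗ W` in `C ⊗ C`. -/
def IsSubcoalgebra (W : Submodule R C) : Prop :=
  ∀ w ∈ W, comul (R := R) w ∈ LinearMap.range (TensorProduct.mapIncl W W)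

namespace IsSubcoalgebra

variable {V W : Submodule R C} {w : C}

theorem leftSlice_mem (hW : IsSubcoalgebra W) (f : C →ₗ[R] R) (hw : w ∈ W) :
    leftSlice f w ∈ W := by
  obtain ⟨z, hz⟩ := hW w hw
  have hslice : (TensorProduct.lid R C).toLinearMap ∘ₗ f.rTensor C ∘ₗ TensorProduct.mapIncl W W =
      W.subtype ∘ₗ (TensorProduct.lid R W).toLinearMap ∘ₗ (f ∘ₗ W.subtype).rTensor W :=
    TensorProduct.ext' fun a b => by simp [TensorProduct.mapIncl]
  rw [leftSlice, LinearMap.comp_apply, LinearMap.comp_apply, ← hz]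
  exact (LinearMap.congr_fun hslice z).symm ▸ Subtype.coe_prop _

theorem rightSlice_mem (hW : IsSubcoalgebra W) (f : C →ₗ[R] R) (hw : w ∈ W) :
    rightSlice f w ∈ W := by
  obtain ⟨z, hz⟩ := hW w hw
  have hslice : (TensorProduct.rid R C).toLinearMap ∘ₗ f.lTensor C ∘ₗ TensorProduct.mapIncl W W =
      W.subtype ∘ₗ (TensorProduct.rid R W).toLinearMap ∘ₗ (f ∘ₗ W.subtype).lTensor W :=
    TensorProduct.ext' fun a b => by simp [TensorProduct.mapIncl]
  rw [rightSlice, LinearMap.comp_apply, LinearMap.comp_apply, ← hz]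
  exact (LinearMap.congr_fun hslice z).symm ▸ Subtype.coe_prop _

theorem rightSlice_congr (hW : IsSubcoalgebra W) {f g : C →ₗ[R] R} (hfg : ∀ a ∈ W, f a = g a)
    (hw : w ∈ W) : rightSlice f w = rightSlice g w := by
  obtain ⟨z, hz⟩ := hW w hw
  have hrestrict : f.lTensor C ∘ₗ TensorProduct.mapIncl W W =
      g.lTensor C ∘ₗ TensorProduct.mapIncl W W :=
    TensorProduct.ext' fun a b => by simp [TensorProduct.mapIncl, hfg b b.2]
  simp only [rightSlice, LinearMap.comp_apply, ← hz]
  exact congrArg _ (LinearMap.congr_fun hrestrict z)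

theorem bot : IsSubcoalgebra (⊥ : Submodule R C) := by
  rintro w rfl
  simp

theorem sup (hV : IsSubcoalgebra V) (hW : IsSubcoalgebra W) : IsSubcoalgebra (V ⊔ W) := by
  have hle : V ⊔ W ≤ (LinearMap.range (TensorProduct.mapIncl (V ⊔ W) (V ⊔ W))).comap comul :=
    sup_le
      (fun v hv => TensorProduct.range_mapIncl_mono le_sup_left le_sup_left (hV v hv))
      (fun w hw => TensorProduct.range_mapIncl_mono le_sup_right le_sup_right (hW w hw))
  exact fun w hw => hle hw

end IsSubcoalgebra

/-- `D` is a simple subcoalgebra. Simplicity is stated as: a subcoalgebra meeting `D` nontrivially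
contains `D`. Over a field the intersection of two subcoalgebras is a subcoalgebra, so this is the
usual condition that the only subcoalgebras inside `D` are `0` and `D`. -/
structure IsSimpleSubcoalgebra (D : Submodule R C) : Prop where
  isSubcoalgebra : IsSubcoalgebra D
  ne_bot : D ≠ ⊥
  le_of_not_disjoint : ∀ ⦃W : Submodule R C⦄, IsSubcoalgebra W → ¬Disjoint D W → D ≤ W

end Subcoalgebra

section SimpleSubcoalgebra

variable {k C : Type*} [Field k] [AddCommGroup C] [Module k C] [Coalgebra k C]
  {D V W : Submodule k C}

theorem IsSubcoalgebra.le_of_le_sup_of_disjoint (hD : IsSubcoalgebra D) (hV : IsSubcoalgebra V)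
    (hW : IsSubcoalgebra W) (hle : D ≤ V ⊔ W) (hDV : Disjoint D V) : D ≤ W := by
  obtain ⟨E, hVE, hDE⟩ := hDV.symm.exists_isCompl
  let f : C →ₗ[k] k := LinearMap.ofIsCompl hDE.symm (counit ∘ₗ D.subtype) 0
  have hfD : ∀ a ∈ D, f a = counit (R := k) a := fun a ha =>
    LinearMap.ofIsCompl_apply_left hDE.symm ⟨a, ha⟩
  have hfV : ∀ a ∈ V, f a = (0 : C →ₗ[k] k) a := fun a ha =>
    LinearMap.ofIsCompl_apply_right hDE.symm ⟨a, hVE ha⟩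
  intro d hd
  obtain ⟨v, hv, w, hw, hvw⟩ := Submodule.mem_sup.1 (hle hd)
  have hslice : d = rightSlice f w := calc
    d = rightSlice f d := by rw [hD.rightSlice_congr hfD hd, rightSlice_counit]
    _ = rightSlice f w := by
      rw [← hvw, map_add, hV.rightSlice_congr hfV hv, rightSlice_zero, zero_add]
  exact hslice ▸ hW.rightSlice_mem f hw

theorem IsSimpleSubcoalgebra.exists_le_of_le_finset_sup (hD : IsSimpleSubcoalgebra D)
    {P : Type*} (s : Finset P) {V : P → Submodule k C} (hV : ∀ p ∈ s, IsSubcoalgebra (V p))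
    (hle : D ≤ s.sup V) : ∃ p ∈ s, D ≤ V p := by
  classical
  induction s using Finset.induction_on with
  | empty => exact absurd (le_bot_iff.1 hle) hD.ne_bot
  | insert p s _ ih =>
    rw [Finset.sup_insert] at hle
    have hVs : ∀ q ∈ s, IsSubcoalgebra (V q) := fun q hq => hV q (Finset.mem_insert_of_mem hq)
    have hVp : IsSubcoalgebra (V p) := hV p (Finset.mem_insert_self p s)
    by_cases hdisj : Disjoint D (V p)
    · have hsup : IsSubcoalgebra (s.sup V) :=
        Finset.sup_induction IsSubcoalgebra.bot (fun _ h _ h' => h.sup h') hVs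
      obtain ⟨q, hq, hDq⟩ :=
        ih hVs (hD.isSubcoalgebra.le_of_le_sup_of_disjoint hVp hsup hle hdisj)
      exact ⟨q, Finset.mem_insert_of_mem hq, hDq⟩
    · exact ⟨p, Finset.mem_insert_self p s, hD.le_of_not_disjoint hVp hdisj⟩

end SimpleSubcoalgebra

section EntrySpan

variable {R M ι : Type*} [CommSemiring R] [AddCommMonoid M] [Module R M]

variable (R) in
/-- The span of the entries of a square array. -/
def entrySpan (e : ι → ι → M) : Submodule R M :=
  Submodule.span R (Set.range (Function.uncurry e))

theorem mem_entrySpan (e : ι → ι → M) (i j : ι) : e i j ∈ entrySpan R e :=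
  Submodule.subset_span ⟨(i, j), rfl⟩

theorem entrySpan_le {e : ι → ι → M} {W : Submodule R M} (h : ∀ i j, e i j ∈ W) :
    entrySpan R e ≤ W :=
  Submodule.span_le.2 (Set.range_subset_iff.2 fun p => h p.1 p.2)

theorem entrySpan_fin_two (e : Fin 2 → Fin 2 → M) :
    entrySpan R e = Submodule.span R {e 0 0, e 0 1, e 1 1, e 1 0} := by
  rw [entrySpan]
  congr 1
  ext a
  simp only [Set.mem_range, Prod.exists, Function.uncurry_apply_pair, Fin.exists_fin_two,
    Set.mem_insert_iff, Set.mem_singleton_iff, eq_comm (a := a)]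
  tauto

end EntrySpan

section Comatrix

variable {R C ι : Type*} [Fintype ι] [CommSemiring R] [AddCommMonoid C] [Module R C]
  [Coalgebra R C]

variable (R) in
/-- The array `e` is a comatrix (its entries are matrix coefficients):
`Δ(e i j) = ∑ l, e i l ⊗ e l j`. The condition `ε(e i j) = δ_{ij}` is not part of the definition;
it follows when the entries are linearly independent. -/
def IsComatrix (e : ι → ι → C) : Prop :=
  ∀ i j, comul (R := R) (e i j) = ∑ l, e i l ⊗ₜ[R] e l j

namespace IsComatrix

variable {e : ι → ι → C}

theorem leftSlice_apply (he : IsComatrix R e) (f : C →ₗ[R] R) (i j : ι) :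
    leftSlice f (e i j) = ∑ l, f (e i l) • e l j := by
  simp [leftSlice, he i j]

theorem rightSlice_apply (he : IsComatrix R e) (f : C →ₗ[R] R) (i j : ι) :
    rightSlice f (e i j) = ∑ l, f (e l j) • e i l := by
  simp [rightSlice, he i j]

theorem map {C' : Type*} [AddCommMonoid C'] [Module R C'] [Coalgebra R C'] (he : IsComatrix R e)
    (ψ : C →ₗc[R] C') : IsComatrix R fun i j => ψ (e i j) := fun i j => by
  rw [← CoalgHomClass.map_comp_comul_apply, he i j, map_sum]
  rfl

theorem isSubcoalgebra_entrySpan (he : IsComatrix R e) : IsSubcoalgebra (entrySpan R e) := by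
  let T := LinearMap.range (TensorProduct.mapIncl (entrySpan R e) (entrySpan R e))
  have hle : entrySpan R e ≤ T.comap comul := entrySpan_le fun i j => by
    rw [Submodule.mem_comap, he i j]
    exact T.sum_mem fun l _ =>
      ⟨⟨e i l, mem_entrySpan e i l⟩ ⊗ₜ ⟨e l j, mem_entrySpan e l j⟩, rfl⟩
  exact fun w hw => hle hw

end IsComatrix

theorem IsComatrix.hadamard {A : Type*} [Semiring A] [Bialgebra R A] {e f : ι → ι → A}
    (he : IsComatrix R e) (hf : IsComatrix R f) (hrow : ∀ i l l', l ≠ l' → e i l * f i l' = 0) :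
    IsComatrix R fun i j => e i j * f i j := fun i j => by
  rw [Bialgebra.comul_mul, he i j, hf i j, Finset.sum_mul_sum]
  refine Finset.sum_congr rfl fun l _ => ?_
  rw [Finset.sum_eq_single l (fun l' _ hl' => ?_) (by simp), Algebra.TensorProduct.tmul_mul_tmul]
  rw [Algebra.TensorProduct.tmul_mul_tmul, hrow i l l' hl'.symm, TensorProduct.zero_tmul]

end Comatrix

section SimpleComatrix

variable {k C ι : Type*} [Field k] [AddCommGroup C] [Module k C]

theorem exists_dual_of_linearIndependent [DecidableEq ι] {v : ι → C} (hv : LinearIndependent k v)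
    (i : ι) : ∃ φ : C →ₗ[k] k, ∀ j, φ (v j) = if j = i then 1 else 0 := by
  obtain ⟨φ, hφ⟩ := LinearMap.exists_extend ((Basis.span hv).coord i)
  refine ⟨φ, fun j => ?_⟩
  have hj : φ (Basis.span hv j : C) = (Basis.span hv).coord i (Basis.span hv j) :=
    LinearMap.congr_fun hφ _
  rwa [Basis.coord_apply, Basis.repr_self, Finsupp.single_apply, Basis.span_apply] at hj

variable [Fintype ι] [Coalgebra k C] {e : ι → ι → C}

namespace IsComatrix

/- If `w = ∑ c i j • e i j` with `c p q ≠ 0`, slicing `w` on the left by the functional dual to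
`e p a` and then on the right by the one dual to `e b q` gives `c p q • e a b`. -/
theorem entrySpan_le_of_mem (he : IsComatrix k e)
    (hli : LinearIndependent k (Function.uncurry e)) {W : Submodule k C} (hW : IsSubcoalgebra W)
    {w : C} (hwe : w ∈ entrySpan k e) (hwW : w ∈ W) (hw : w ≠ 0) : entrySpan k e ≤ W := by
  classical
  choose φ hφ using exists_dual_of_linearIndependent hli
  have hdual : ∀ p q i j, φ (p, q) (e i j) = if i = p ∧ j = q then 1 else 0 := fun p q i j => by
    simpa only [Function.uncurry_apply_pair, Prod.mk.injEq] using hφ (p, q) (i, j)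
  obtain ⟨c, rfl⟩ := (Submodule.mem_span_range_iff_exists_fun k).1 hwe
  obtain ⟨⟨p, q⟩, hpq⟩ : ∃ p, c p ≠ 0 := by
    by_contra! hc
    exact hw (by simp [hc])
  refine entrySpan_le fun a b => (Submodule.smul_mem_iff W hpq).1 ?_
  have hleft : ∀ i j, leftSlice (φ (p, a)) (e i j) = if i = p then e a j else 0 := fun i j => by
    simp [he.leftSlice_apply, hdual, ite_and, ite_smul]
  have hright : ∀ j, rightSlice (φ (b, q)) (e a j) = if j = q then e a b else 0 := fun j => by
    simp [he.rightSlice_apply, hdual, ite_and, ite_smul]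
  have hslice : rightSlice (φ (b, q)) (leftSlice (φ (p, a))
      (∑ r, c r • Function.uncurry e r)) = c (p, q) • e a b := by
    simp [Fintype.sum_prod_type, hleft, hright]
  exact hslice ▸ hW.rightSlice_mem _ (hW.leftSlice_mem _ hwW)

theorem isSimpleSubcoalgebra_entrySpan [Nonempty ι] (he : IsComatrix k e)
    (hli : LinearIndependent k (Function.uncurry e)) : IsSimpleSubcoalgebra (entrySpan k e) where
  isSubcoalgebra := he.isSubcoalgebra_entrySpan
  ne_bot := by
    obtain ⟨i⟩ := ‹Nonempty ι›
    exact (Submodule.ne_bot_iff _).2 ⟨e i i, mem_entrySpan e i i, hli.ne_zero (i, i)⟩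
  le_of_not_disjoint W hW hmeet := by
    rw [Submodule.disjoint_def] at hmeet
    push Not at hmeet
    obtain ⟨w, hwe, hwW, hw⟩ := hmeet
    exact he.entrySpan_le_of_mem hli hW hwe hwW hw

end IsComatrix

end SimpleComatrix

namespace Suzuki

variable {k A : Type*} [Field k] [CharZero k] [IsAlgClosed k] [Ring A] [HopfAlgebra k A]
  (S : Suzuki k A)

theorem mul_eq_zero_of_add_ne {i j i' j' : Fin 2} (h : i + j ≠ i' + j') :
    S.x i j * S.x i' j' = 0 := by
  apply S.rel_odd
  revert i j i' j'
  decide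

theorem pow_mul_eq_zero_of_add_ne {i j i' j' : Fin 2} (h : i + j ≠ i' + j') {m : ℕ}
    (hm : m ≠ 0) : S.x i j ^ m * S.x i' j' = 0 := by
  obtain ⟨m, rfl⟩ := Nat.exists_eq_succ_of_ne_zero hm
  rw [pow_succ, mul_assoc, S.mul_eq_zero_of_add_ne h, mul_zero]

theorem pow_two_mul_eq (i j : Fin 2) (m : ℕ) :
    S.x i j ^ (2 * m) = S.x 0 (i + j) ^ (2 * m) := by
  have hsq : S.x i j ^ 2 = S.x 0 (i + j) ^ 2 := by
    fin_cases i <;> fin_cases j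
    exacts [rfl, rfl, S.rel_sq2.symm, S.rel_sq1.symm]
  rw [pow_mul, hsq, ← pow_mul]

theorem isComatrix_chi {t : ℕ} (ht : 1 ≤ t) : IsComatrix k fun i j => chi S.x i j t := fun i j => by
  rw [S.comul_chi i j t ht, Fin.sum_univ_two]

theorem isComatrix_x : IsComatrix k S.x := by
  simpa only [chi, mul_one] using S.isComatrix_chi le_rfl

theorem isComatrix_pow {m : ℕ} (hm : 1 ≤ m) : IsComatrix k fun i j => S.x i j ^ m := by
  induction m, hm using Nat.le_induction with
  | base => simpa only [pow_one] using S.isComatrix_x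
  | succ m hm ih =>
    simpa only [pow_succ] using ih.hadamard S.isComatrix_x fun i l l' hl =>
      S.pow_mul_eq_zero_of_add_ne (by simpa using hl) (by omega)

/-- The entry `x_{ij}^{2m} χ_{ij}^t` of the `2 × 2` comatrix spanning `C_{mt}`, written with
`x_{ij}^{2m} = x_{0,i+j}^{2m}` to match the paper's spanning set. It is also used for `t = 0` and
`t = n`, where the entries are linearly dependent. -/
def blockEntry (m t : ℕ) (i j : Fin 2) : A :=
  S.x 0 (i + j) ^ (2 * m) * chi S.x i j t

/-- The subcoalgebra `C_{mt}`, also used for `t = 0` and `t = n`. -/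
def block (m t : ℕ) : Submodule k A :=
  entrySpan k (S.blockEntry m t)

theorem block_eq_span (m t : ℕ) : S.block m t = Submodule.span k
    {S.x 0 0 ^ (2 * m) * chi S.x 0 0 t, S.x 0 1 ^ (2 * m) * chi S.x 0 1 t,
      S.x 0 0 ^ (2 * m) * chi S.x 1 1 t, S.x 0 1 ^ (2 * m) * chi S.x 1 0 t} :=
  entrySpan_fin_two _

theorem isComatrix_blockEntry {m : ℕ} (hm : 1 ≤ m) (t : ℕ) : IsComatrix k (S.blockEntry m t) := by
  have hentry : S.blockEntry m t = fun i j => S.x i j ^ (2 * m) * chi S.x i j t := by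
    funext i j
    rw [blockEntry, pow_two_mul_eq S i j]
  have hpow := S.isComatrix_pow (show 1 ≤ 2 * m by omega)
  rw [hentry]
  rcases t with _ | t
  · simpa only [chi, mul_one] using hpow
  · refine hpow.hadamard (S.isComatrix_chi t.succ_pos) fun i l l' hl => ?_
    rw [chi, ← mul_assoc, S.pow_mul_eq_zero_of_add_ne (by simpa using hl) (by omega), zero_mul]

theorem finrank_block_le (m t : ℕ) : finrank k (S.block m t) ≤ 4 :=
  (finrank_range_le_card _).trans_eq (by simp)

theorem exists_blockEntry_eq_smul (m : ℕ) {t : ℕ} (ht : t = 0 ∨ t = S.n) (i j : Fin 2) :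
    ∃ c : k, S.blockEntry m t i j = c • S.blockEntry m t 0 (i + j) := by
  rcases ht with rfl | rfl
  · exact ⟨1, by simp [blockEntry, chi]⟩
  · fin_cases i <;> fin_cases j
    · exact ⟨1, by simp⟩
    · exact ⟨1, by simp⟩
    · exact ⟨S.lam, by simp [blockEntry, S.rel_chi1]⟩
    · exact ⟨1, by simp [blockEntry, S.rel_chi2]⟩

theorem finrank_block_le_two (m : ℕ) {t : ℕ} (ht : t = 0 ∨ t = S.n) :
    finrank k (S.block m t) ≤ 2 := by
  let U : Submodule k A := Submodule.span k (Set.range (S.blockEntry m t 0))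
  have hle : S.block m t ≤ U := entrySpan_le fun i j => by
    obtain ⟨c, hc⟩ := S.exists_blockEntry_eq_smul m ht i j
    exact hc ▸ U.smul_mem c (Submodule.subset_span ⟨i + j, rfl⟩)
  have : FiniteDimensional k U := FiniteDimensional.span_of_finite k (Set.finite_range _)
  exact (Submodule.finrank_mono hle).trans
    ((finrank_range_le_card _).trans_eq (Fintype.card_fin 2))

theorem exists_pow_mul_self (i j : Fin 2) :
    ∃ u : kˣ, S.x 0 (i + j) ^ (2 * S.N) * S.x i j = u • S.x i j := by
  have hij : i + j = 0 ∨ i + j = 1 := by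
    revert i j
    decide
  have hN : 2 * S.N ≠ 0 := by
    have := S.hN
    omega
  have hrel := congrArg (· * S.x i j) S.rel_mu
  simp only [add_mul, smul_mul_assoc, one_mul] at hrel
  rcases hij with hij | hij
  · rw [S.pow_mul_eq_zero_of_add_ne (j := 1) (by simp [hij]) hN, smul_zero, add_zero] at hrel
    exact ⟨1, by rw [hij, hrel, one_smul]⟩
  · rw [S.pow_mul_eq_zero_of_add_ne (j := 0) (by simp [hij]) hN, zero_add] at hrel
    have hμ : S.μ ≠ 0 := by rcases S.hμ with h | h <;> simp [h]
    exact ⟨(Units.mk0 S.μ hμ)⁻¹, by rw [hij, eq_inv_smul_iff]; exact hrel⟩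

/-- The basis monomials `x₁₁^s χ₂₂^t` (for `r = 0`) and `x₁₂^s χ₂₁^t` (for `r = 1`). -/
def monomial (r : Fin 2) (s t : ℕ) : A :=
  S.x 0 r ^ s * chi S.x 1 (r + 1) t

theorem monomial_eq_basis :
    (fun p : Fin 2 × Fin (2 * S.N) × Fin S.n => S.monomial p.1 (p.2.1 + 1) p.2.2) =
      fun p => if p.1 = 0 then S.x 0 0 ^ ((p.2.1 : ℕ) + 1) * chi S.x 1 1 (p.2.2 : ℕ)
        else S.x 0 1 ^ ((p.2.1 : ℕ) + 1) * chi S.x 1 0 (p.2.2 : ℕ) := by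
  funext ⟨r, s, t⟩
  fin_cases r <;> rfl

theorem linearIndependent_monomial : LinearIndependent k
    fun p : Fin 2 × Fin (2 * S.N) × Fin S.n => S.monomial p.1 (p.2.1 + 1) p.2.2 :=
  S.monomial_eq_basis ▸ S.basis_indep

theorem span_monomial : Submodule.span k (Set.range
    fun p : Fin 2 × Fin (2 * S.N) × Fin S.n => S.monomial p.1 (p.2.1 + 1) p.2.2) = ⊤ :=
  S.monomial_eq_basis ▸ S.basis_span

theorem linearIndependent_x : LinearIndependent k (Function.uncurry S.x) := by
  have hN := S.hN
  have hn := S.hn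
  choose u hu using S.exists_pow_mul_self
  let w : Fin 2 × Fin 2 → kˣ := fun p => if p.1 = 0 then 1 else u p.1 p.2
  let σ : Fin 2 × Fin 2 → Fin 2 × Fin (2 * S.N) × Fin S.n := fun p =>
    if p.1 = 0 then (p.2, ⟨0, by omega⟩, ⟨0, by omega⟩)
    else (p.2 + 1, ⟨2 * S.N - 1, by omega⟩, ⟨1, by omega⟩)
  have hσ : Function.Injective σ := by
    rintro ⟨i, j⟩ ⟨i', j'⟩ h
    fin_cases i <;> fin_cases i' <;> simp_all [σ]
  have hw : w • Function.uncurry S.x = (fun p : Fin 2 × Fin (2 * S.N) × Fin S.n =>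
      S.monomial p.1 (p.2.1 + 1) p.2.2) ∘ σ := by
    funext ⟨i, j⟩
    have hj : j + 1 + 1 = j := by
      revert j
      decide
    fin_cases i
    · simp [w, σ, monomial, chi]
    · simp [w, σ, monomial, chi, ← hu, hj, add_comm 1 j,
        Nat.sub_add_cancel (show 1 ≤ 2 * S.N by omega)]
  exact (LinearIndependent.units_smul_iff _ w).1 (hw ▸ S.linearIndependent_monomial.comp σ hσ)

theorem monomial_even_mem_block (r : Fin 2) (m t : ℕ) :
    S.monomial r (2 * m) t ∈ S.block m t := by
  have hr : 1 + (r + 1) = r := by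
    revert r
    decide
  have hmem := mem_entrySpan (R := k) (S.blockEntry m t) 1 (r + 1)
  rwa [blockEntry, hr] at hmem

theorem monomial_odd_mem_block (r : Fin 2) (m t : ℕ) :
    S.monomial r (2 * m + 1) t ∈ S.block m (t + 1) := by
  have hmem := mem_entrySpan (R := k) (S.blockEntry m (t + 1)) 0 r
  rwa [blockEntry, chi, zero_add, zero_add, ← mul_assoc, ← pow_succ] at hmem

theorem monomial_one_mem_block (r : Fin 2) (t : ℕ) :
    S.monomial r 1 t ∈ S.block S.N (t + 1) := by
  obtain ⟨u, hu⟩ := S.exists_pow_mul_self 0 r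
  have hmul : S.monomial r (2 * S.N + 1) t = u • S.monomial r 1 t := by
    rw [zero_add] at hu
    rw [monomial, monomial, pow_succ, hu, pow_one, smul_mul_assoc]
  exact (Submodule.smul_mem_iff_of_isUnit _ u.isUnit).1 (hmul ▸ S.monomial_odd_mem_block r S.N t)

theorem exists_monomial_mem_block (r : Fin 2) {s t : ℕ} (hs : s < 2 * S.N) (ht : t < S.n) :
    ∃ p ∈ Finset.Icc 1 S.N ×ˢ Finset.range (S.n + 1),
      S.monomial r (s + 1) t ∈ S.block p.1 p.2 := by
  have hN := S.hN
  simp only [Finset.mem_product, Finset.mem_Icc, Finset.mem_range]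
  obtain ⟨m, rfl | rfl⟩ := Nat.even_or_odd' s
  · rcases Nat.eq_zero_or_pos m with rfl | hm
    · exact ⟨(S.N, t + 1), by omega, S.monomial_one_mem_block r t⟩
    · exact ⟨(m, t + 1), by omega, S.monomial_odd_mem_block r m t⟩
  · exact ⟨(m + 1, t), by omega, S.monomial_even_mem_block r (m + 1) t⟩

theorem sup_block_eq_top :
    (Finset.Icc 1 S.N ×ˢ Finset.range (S.n + 1)).sup (fun p => S.block p.1 p.2) = ⊤ := by
  rw [eq_top_iff, ← S.span_monomial, Submodule.span_le]
  rintro _ ⟨⟨r, s, t⟩, rfl⟩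
  obtain ⟨p, hp, hmem⟩ := S.exists_monomial_mem_block r s.2 t.2
  exact Finset.le_sup (f := fun p => S.block p.1 p.2) hp hmem

theorem exists_entrySpan_eq_block {d : Fin 2 → Fin 2 → A} (hd : IsComatrix k d)
    (hli : LinearIndependent k (Function.uncurry d)) :
    ∃ m t : ℕ, 1 ≤ m ∧ m ≤ S.N ∧ 1 ≤ t ∧ t ≤ S.n - 1 ∧ entrySpan k d = S.block m t := by
  have hsimple := hd.isSimpleSubcoalgebra_entrySpan hli
  obtain ⟨⟨m, t⟩, hmt, hle⟩ :=
    hsimple.exists_le_of_le_finset_sup (V := fun p => S.block p.1 p.2)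
      (Finset.Icc 1 S.N ×ˢ Finset.range (S.n + 1))
      (fun p hp => (S.isComatrix_blockEntry
        (Finset.mem_Icc.1 (Finset.mem_product.1 hp).1).1 p.2).isSubcoalgebra_entrySpan)
      (S.sup_block_eq_top ▸ le_top)
  replace hle : entrySpan k d ≤ S.block m t := hle
  have : FiniteDimensional k (S.block m t) :=
    FiniteDimensional.span_of_finite k (Set.finite_range _)
  have hfour : finrank k (entrySpan k d) = 4 := (finrank_span_eq_card hli).trans (by simp)
  have ht : ¬(t = 0 ∨ t = S.n) := fun ht => by
    have hmono := Submodule.finrank_mono hle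
    have htwo := S.finrank_block_le_two m ht
    omega
  simp only [Finset.mem_product, Finset.mem_Icc, Finset.mem_range] at hmt
  exact ⟨m, t, hmt.1.1, hmt.1.2, by omega, by omega,
    Submodule.eq_of_le_of_finrank_le hle (hfour ▸ S.finrank_block_le m t)⟩

end Suzuki

theorem stmt5_general (k A : Type*) [Field k] [CharZero k] [IsAlgClosed k]
    [Ring A] [HopfAlgebra k A] (S : Suzuki k A)
    (ψ : A →ₗc[k] A) (hψ : Function.Injective ψ) :
    ∃ s t : ℕ, 1 ≤ s ∧ s ≤ S.N ∧ 1 ≤ t ∧ t ≤ S.n - 1 ∧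
      Submodule.map (ψ : A →ₗ[k] A)
          (Submodule.span k {S.x 0 0, S.x 0 1, S.x 1 0, S.x 1 1})
        = Submodule.span k
            {S.x 0 0 ^ (2 * s) * chi S.x 0 0 t, S.x 0 1 ^ (2 * s) * chi S.x 0 1 t,
             S.x 0 0 ^ (2 * s) * chi S.x 1 1 t, S.x 0 1 ^ (2 * s) * chi S.x 1 0 t} := by
  have hli := S.linearIndependent_x.map' (ψ : A →ₗ[k] A) (LinearMap.ker_eq_bot.2 hψ)
  obtain ⟨s, t, hs, hsN, ht, htn, hspan⟩ :=
    S.exists_entrySpan_eq_block (S.isComatrix_x.map ψ) hli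
  refine ⟨s, t, hs, hsN, ht, htn, ?_⟩
  rw [← S.block_eq_span, ← hspan, Set.pair_comm (S.x 1 0), ← entrySpan_fin_two, entrySpan,
    Submodule.map_span, ← Set.range_comp]
  rfl

/-- for every Hopf algebra automorphism ψ of A (with n of the given parity),
there are 1 ≤ s ≤ N and 1 ≤ t ≤ n-1 with ψ(C_{N1}) = C_{st}. -/
theorem stmt5 (k A : Type*) [Field k] [CharZero k] [IsAlgClosed k]
    [Ring A] [HopfAlgebra k A] (S : Suzuki k A) (hpar : Even S.n)
    (ψ : A ≃ₗ[k] A) (hψ : IsHopfAut k ψ) :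
    ∃ s t : ℕ, 1 ≤ s ∧ s ≤ S.N ∧ 1 ≤ t ∧ t ≤ S.n - 1 ∧
      Submodule.map ψ.toLinearMap
          (Submodule.span k {S.x 0 0, S.x 0 1, S.x 1 0, S.x 1 1})
        = Submodule.span k
            {S.x 0 0 ^ (2 * s) * chi S.x 0 0 t, S.x 0 1 ^ (2 * s) * chi S.x 0 1 t,
             S.x 0 0 ^ (2 * s) * chi S.x 1 1 t, S.x 0 1 ^ (2 * s) * chi S.x 1 0 t} := by
  obtain ⟨-, -, hcomul, hcounit⟩ := hψ
  exact stmt5_general k A S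
    { ψ.toLinearMap with
      counit_comp := LinearMap.ext hcounit
      map_comp_comul := LinearMap.ext fun a => (hcomul a).symm } ψ.injective
end
end

section
/- Let 1 ≤ s ≤ N, 1 ≤ t ≤ n − 1 with t odd, and set P = x11^{2s}χ11^t, Q = x11^{2s}χ22^t, R = x12^{2s}χ12^t, T = x12^{2s}χ21^t in A = A_{Nn}^{μλ}. For scalars a1, a2, a3, b1, b2, b3 ∈ k put y = a1·P + (1−a1)·Q + a2·R + a3·T and z = b1·P + (1−b1)·Q + b2·R + b3·T; then y² = z² if and only if (a1−b1)(1−a1−b1) = 0, a2² + a3² = b2² + b3², and moreover a2·a3 = b2·b3 when 2t ≠ n, while (1+λ)·a2·a3 = (1+λ)·b2·b3 when 2t = n. Likewise, for scalars d1, d2, d3, e1, e2, e3 ∈ k put u = d1·P − d1·Q + d2·R + d3·T and v = e1·P − e1·Q + e2·R + e3·T; then u² = v² if and only if d1² = e1², d2² + d3² = e2² + e3², and moreover d2·d3 = e2·e3 when 2t ≠ n, while (1+λ)·d2·d3 = (1+λ)·e2·e3 when 2t = n. -/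
/-!
Both pairs `x₁₁, x₂₂` and `x₁₂, x₂₁` consist of two letters `p, q` with `p² = q²`, and the two pairs
annihilate each other. Since `x₁₁^{2N} = 1 - μ x₁₂^{2N}` fixes every nonempty word in the first
pair and kills every nonempty word in the second, an equality of squares can be tested on each pair
separately.

For odd `t` the alternating words `χ_p^t, χ_q^t` are palindromes with square `p^{2t}`, and their
products are the alternating words of length `2t`. Hence `p^{2s} (c χ_p^t + d χ_q^t)` has square
`(c² + d²) p^{4s+2t} + c d p^{4s} (χ_p^{2t} + χ_q^{2t})`. If `2t ≠ n` the two vectors in this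
expression are linearly independent: for `2t < n` one peels off a letter of `χ_p^{2t}`, and for
`2t > n` the relation `χ_q^n = λ χ_p^n` (`λ = 1` for the first pair) folds words of length `2t`
back to words of length `2n - 2t`. If `2t = n`, the second vector is `1 + λ` times
`p^{4s+1} χ_q^{n-1}`, which is again independent of the power of `p`.
-/

open scoped TensorProduct

noncomputable section

theorem pow_mul_eq_zero_of_mul_eq_zero {M : Type*} [MonoidWithZero M] {a b : M} (h : a * b = 0)
    {m : ℕ} (hm : m ≠ 0) : a ^ m * b = 0 := by
  rw [← Nat.sub_one_add_one hm, pow_succ, mul_assoc, h, mul_zero]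

theorem add_sq_of_mul_eq_zero {A : Type*} [Semiring A] {x y : A} (hxy : x * y = 0)
    (hyx : y * x = 0) :
    (x + y) ^ 2 = x ^ 2 + y ^ 2 := by
  simp only [sq, add_mul, mul_add, hxy, hyx, add_zero, zero_add]

theorem add_eq_add_iff_of_mul_eq {A : Type*} [NonUnitalNonAssocRing A] {e x x' y y' : A}
    (hx : e * x = x) (hx' : e * x' = x') (hy : e * y = 0) (hy' : e * y' = 0) :
    x + y = x' + y' ↔ x = x' ∧ y = y' := by
  refine ⟨fun h => ?_, fun ⟨h₁, h₂⟩ => by rw [h₁, h₂]⟩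
  have hxx' : x = x' := by
    simpa [mul_add, hx, hx', hy, hy'] using congrArg (e * ·) h
  exact ⟨hxx', add_left_cancel (hxx' ▸ h)⟩

section Monoid

variable {M : Type*} [Monoid M] {p q : M}

/-- The alternating product `p * q * p * ⋯` with `m` factors. The element `χ_{ij}^m` of the Suzuki
algebra is the case `p = x i j`, `q = x (i + 1) (j + 1)`, where `p` and `q` play symmetric roles. -/
def altProd (p q : M) : ℕ → M
  | 0 => 1
  | m + 1 => p * altProd q p m

@[simp]
theorem altProd_zero (p q : M) : altProd p q 0 = 1 := by
  rw [altProd]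

theorem altProd_succ (p q : M) (m : ℕ) : altProd p q (m + 1) = p * altProd q p m := by
  rw [altProd]

theorem altProd_two_mul (p q : M) (u : ℕ) : altProd p q (2 * u) = (p * q) ^ u := by
  induction u with
  | zero => simp
  | succ u ih => rw [Nat.mul_succ, altProd_succ, altProd_succ, ih, ← mul_assoc, pow_succ']

theorem altProd_two_mul_add_one (p q : M) (u : ℕ) :
    altProd p q (2 * u + 1) = p * (q * p) ^ u := by
  rw [altProd_succ, altProd_two_mul]

theorem altProd_mul_swap {t : ℕ} (ht : Odd t) :
    altProd p q t * altProd q p t = altProd p q (2 * t) := by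
  obtain ⟨u, rfl⟩ := ht
  rw [altProd_two_mul, altProd_two_mul_add_one, altProd_two_mul_add_one, ← mul_pow_mul,
    mul_assoc, ← mul_assoc p, ← pow_succ', ← pow_add]
  congr 1
  ring

theorem commute_sq_altProd (h : p ^ 2 = q ^ 2) (m : ℕ) : Commute (p ^ 2) (altProd p q m) := by
  induction m generalizing p q with
  | zero => simp
  | succ m ih =>
    rw [altProd_succ]
    exact (Commute.pow_self p 2).mul_right (h ▸ ih h.symm)

theorem commute_pow_altProd (h : p ^ 2 = q ^ 2) (s m : ℕ) :
    Commute (p ^ (2 * s)) (altProd p q m) :=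
  pow_mul p 2 s ▸ (commute_sq_altProd h m).pow_left s

theorem pow_two_mul_eq (h : p ^ 2 = q ^ 2) (s : ℕ) : p ^ (2 * s) = q ^ (2 * s) := by
  rw [pow_mul, h, pow_mul]

theorem altProd_mul_self (h : p ^ 2 = q ^ 2) {t : ℕ} (ht : Odd t) :
    altProd p q t * altProd p q t = p ^ (2 * t) := by
  obtain ⟨u, rfl⟩ := ht
  have hpq : (p * q) * (q * p) = p ^ 4 := by
    rw [mul_assoc, ← mul_assoc q, ← sq, ← h, ← pow_succ, ← pow_succ']
  have hqp : (q * p) * (p * q) = p ^ 4 := by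
    rw [mul_assoc, ← mul_assoc p, ← sq, h, ← pow_succ, ← pow_succ', pow_two_mul_eq h 2]
  have hcomm : Commute (p * q) (q * p) := hpq.trans hqp.symm
  calc altProd p q (2 * u + 1) * altProd p q (2 * u + 1)
      = p * ((q * p) ^ u * (p * q) ^ u) * p := by
        rw [altProd_two_mul_add_one]
        nth_rw 2 [← mul_pow_mul]
        simp only [mul_assoc]
    _ = p ^ (2 * (2 * u + 1)) := by
        rw [← hcomm.symm.mul_pow, hqp, ← pow_mul, ← pow_succ', ← pow_succ]
        congr 1
        ring

end Monoid

section Algebra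

variable {R A : Type*} [CommSemiring R] [Semiring A] [Algebra R A] {p q p' q' : A}

theorem altProd_add_of_altProd_eq_smul (h : p ^ 2 = q ^ 2) {c : R} {n : ℕ}
    (hpq : altProd p q n = c • altProd q p n) (hqp : altProd q p n = c • altProd p q n) {m r : ℕ}
    (hmr : m + r = n) :
    altProd p q (n + r) = c • (p ^ (2 * r) * altProd q p m) := by
  induction r generalizing m p q with
  | zero =>
    obtain rfl : m = n := hmr
    simpa using hpq
  | succ r ih =>
    have ih' : altProd q p (n + r) = c • (q ^ (2 * r) * altProd p q (m + 1)) :=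
      ih h.symm hqp hpq (by omega)
    rw [← add_assoc, altProd_succ, ih', altProd_succ, ← pow_two_mul_eq h, mul_smul_comm]
    simp only [← mul_assoc]
    rw [← pow_succ', ← pow_succ, Nat.mul_succ]

theorem pow_mul_add_succ_eq_smul {N : ℕ} {ν : R} (hp : p ^ (N + 1) = ν • p) (d j : ℕ) :
    p ^ (N * d + j + 1) = ν ^ d • p ^ (j + 1) := by
  induction d with
  | zero => simp
  | succ d ih =>
    rw [show N * (d + 1) + j + 1 = (N * d + j) + (N + 1) by ring, pow_add, hp, mul_smul_comm,
      ← pow_succ, ih, smul_smul, ← pow_succ']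

/-- The element `p ^ (2 * s) * (c • χ_p^t + d • χ_q^t)`. The elements of the theorem are sums of one
such element for `x₁₁, x₂₂` and one for `x₁₂, x₂₁`. -/
def altComb (p q : A) (s t : ℕ) (c d : R) : A :=
  p ^ (2 * s) * (c • altProd p q t + d • altProd q p t)

theorem commute_pow_smul_altProd_add (h : p ^ 2 = q ^ 2) (s t : ℕ) (c d : R) :
    Commute (p ^ (2 * s)) (c • altProd p q t + d • altProd q p t) :=
  ((commute_pow_altProd h s t).smul_right c).add_right
    ((pow_two_mul_eq h s ▸ commute_pow_altProd h.symm s t).smul_right d)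

theorem dvd_altComb (p q : A) {s : ℕ} (hs : 1 ≤ s) (t : ℕ) (c d : R) :
    p ∣ altComb p q s t c d :=
  (dvd_pow_self p (by omega)).mul_right _

theorem altComb_mul_altComb_eq_zero (h : p ^ 2 = q ^ 2) (hpp' : p * p' = 0) {s : ℕ} (hs : 1 ≤ s)
    (t : ℕ) (c d c' d' : R) : altComb p q s t c d * altComb p' q' s t c' d' = 0 := by
  obtain ⟨z, hz⟩ := dvd_altComb p' q' hs t c' d'
  rw [hz, altComb, (commute_pow_smul_altProd_add h s t c d).eq, mul_assoc, ← mul_assoc (p ^ _),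
    pow_mul_eq_zero_of_mul_eq_zero hpp' (by omega), zero_mul, mul_zero]

theorem altComb_sq (h : p ^ 2 = q ^ 2) (s : ℕ) {t : ℕ} (ht : Odd t) (c d : R) :
    altComb p q s t c d ^ 2 = (c ^ 2 + d ^ 2) • p ^ (4 * s + 2 * t)
      + (c * d) • (p ^ (4 * s) * (altProd p q (2 * t) + altProd q p (2 * t))) := by
  have hsq : (c • altProd p q t + d • altProd q p t) ^ 2
      = (c ^ 2 + d ^ 2) • p ^ (2 * t)
        + (c * d) • (altProd p q (2 * t) + altProd q p (2 * t)) := by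
    simp only [sq, add_mul, mul_add, smul_mul_smul_comm, altProd_mul_self h ht,
      altProd_mul_self h.symm ht, altProd_mul_swap ht, ← pow_two_mul_eq h t]
    module
  rw [altComb, (commute_pow_smul_altProd_add h s t c d).mul_pow, hsq, ← pow_mul, mul_add,
    mul_smul_comm, mul_smul_comm, ← pow_add, show 2 * s * 2 = 4 * s by ring]

end Algebra

/-- The relations and the linear independence which hold for each of the pairs `x₁₁, x₂₂` and
`x₁₂, x₂₁`; there `N` is twice the `N` of the Suzuki algebra, and `c`, `ν` are signs. -/
structure IsAltPair {k A : Type*} [Field k] [Ring A] [Algebra k A] (p q : A) (c ν : k)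
    (N n : ℕ) : Prop where
  sq_eq_sq : p ^ 2 = q ^ 2
  N_pos : 0 < N
  ν_ne_zero : ν ≠ 0
  pow_succ_eq : p ^ (N + 1) = ν • p
  c_mul_self : c * c = 1
  altProd_eq : altProd q p n = c • altProd p q n
  linearIndependent : LinearIndependent k fun i : Fin N × Fin n =>
    p ^ ((i.1 : ℕ) + 1) * altProd q p (i.2 : ℕ)

namespace IsAltPair

variable {k A : Type*} [Field k] [Ring A] [Algebra k A] {p q : A} {c ν : k} {N n : ℕ}

theorem altProd_eq_symm (H : IsAltPair p q c ν N n) : altProd p q n = c • altProd q p n := by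
  rw [H.altProd_eq, smul_smul, H.c_mul_self, one_smul]

theorem c_ne_zero (H : IsAltPair p q c ν N n) : c ≠ 0 :=
  left_ne_zero_of_mul_eq_one H.c_mul_self

theorem linearIndependent_pow_mul_altProd (H : IsAltPair p q c ν N n) {ι : Type*} (e : ι → ℕ)
    {j : ι → ℕ} (hj : Function.Injective j) (hjn : ∀ i, j i < n) :
    LinearIndependent k fun i => p ^ (e i + 1) * altProd q p (j i) := by
  let f (i : ι) : Fin N × Fin n := (⟨e i % N, Nat.mod_lt _ H.N_pos⟩, ⟨j i, hjn i⟩)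
  have hf : Function.Injective f := fun a b hab => hj (congrArg (fun x => (x.2 : ℕ)) hab)
  convert (H.linearIndependent.comp f hf).units_smul
    fun i => Units.mk0 (ν ^ (e i / N)) (pow_ne_zero _ H.ν_ne_zero) using 2 with i
  conv_lhs => rw [← Nat.div_add_mod (e i) N, pow_mul_add_succ_eq_smul H.pow_succ_eq]
  exact smul_mul_assoc _ _ _

theorem linearIndependent_pow_pow_mul_altProd (H : IsAltPair p q c ν N n) (a b : ℕ) {m : ℕ}
    (hm : 0 < m) (hmn : m < n) :
    LinearIndependent k ![p ^ (a + 1), p ^ (b + 1) * altProd q p m] := by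
  have hj : Function.Injective ![0, m] := by
    intro i i'; fin_cases i <;> fin_cases i' <;> simp <;> omega
  have hjn : ∀ i, ![0, m] i < n := by
    intro i; fin_cases i <;> simp <;> omega
  convert H.linearIndependent_pow_mul_altProd ![a, b] hj hjn using 1
  ext i; fin_cases i <;> simp

theorem linearIndependent_pow_pow_mul_altProd_add (H : IsAltPair p q c ν N n) (a b : ℕ) {m : ℕ}
    (hm : 2 ≤ m) (hmn : m < n) :
    LinearIndependent k ![p ^ (a + 1), p ^ (b + 1) * (altProd p q m + altProd q p m)] := by
  obtain ⟨m, rfl⟩ : ∃ l, m = l + 1 := ⟨m - 1, by omega⟩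
  have hj : Function.Injective ![0, m, m + 1] := by
    intro i i'; fin_cases i <;> fin_cases i' <;> simp <;> omega
  have hjn : ∀ i, ![0, m, m + 1] i < n := by
    intro i; fin_cases i <;> simp <;> omega
  have hli := Fintype.linearIndependent_iff.1
    (H.linearIndependent_pow_mul_altProd ![a, b + 1, b] hj hjn)
  refine LinearIndependent.pair_iff.2 fun x y hxy => ?_
  have hzero := hli ![x, y, y] (by
    rw [← hxy, altProd_succ p q m, mul_add, ← mul_assoc, ← pow_succ]
    simp [Fin.sum_univ_three, smul_add, add_assoc])
  exact ⟨hzero 0, hzero 1⟩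

theorem linearIndependent_pow_pow_mul_altProd_two_mul_add (H : IsAltPair p q c ν N n) (a b : ℕ)
    {t : ℕ} (ht : 1 ≤ t) (htn : t < n) (h2t : 2 * t ≠ n) :
    LinearIndependent k
      ![p ^ (a + 1), p ^ (b + 1) * (altProd p q (2 * t) + altProd q p (2 * t))] := by
  rcases lt_or_gt_of_ne h2t with hlt | hgt
  · exact H.linearIndependent_pow_pow_mul_altProd_add a b (by omega) hlt
  · obtain ⟨r, hr⟩ : ∃ r, 2 * t = n + r := ⟨2 * t - n, by omega⟩
    obtain ⟨m, hm⟩ : ∃ m, m + r = n := ⟨n - r, by omega⟩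
    have hfold : p ^ (b + 1) * (altProd p q (2 * t) + altProd q p (2 * t))
        = c • (p ^ (b + 2 * r + 1) * (altProd p q m + altProd q p m)) := by
      rw [hr, altProd_add_of_altProd_eq_smul H.sq_eq_sq H.altProd_eq_symm H.altProd_eq hm,
        altProd_add_of_altProd_eq_smul H.sq_eq_sq.symm H.altProd_eq H.altProd_eq_symm hm,
        ← pow_two_mul_eq H.sq_eq_sq, ← smul_add, ← mul_add, mul_smul_comm, ← mul_assoc, ← pow_add,
        add_comm (altProd q p m), add_right_comm]
    rw [hfold]
    simpa using (LinearIndependent.pair_smul_smul_iff isUnit_one H.c_ne_zero.isUnit).2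
      (H.linearIndependent_pow_pow_mul_altProd_add a (b + 2 * r) (by omega) (by omega))

theorem pow_mul_altProd_add_of_length_eq (H : IsAltPair p q c ν N (n + 1)) (b : ℕ) :
    p ^ b * (altProd p q (n + 1) + altProd q p (n + 1))
      = (1 + c) • (p ^ (b + 1) * altProd q p n) := by
  rw [H.altProd_eq, altProd_succ, pow_succ, mul_assoc]
  simp only [mul_add, mul_smul_comm, add_smul, one_smul]

theorem smul_pow_add_smul_eq_iff (H : IsAltPair p q c ν N n) (a b : ℕ) {t : ℕ} (ht : 1 ≤ t)
    (htn : t < n) (x y x' y' : k) :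
    x • p ^ (a + 1) + y • (p ^ (b + 1) * (altProd p q (2 * t) + altProd q p (2 * t)))
        = x' • p ^ (a + 1) + y' • (p ^ (b + 1) * (altProd p q (2 * t) + altProd q p (2 * t)))
      ↔ x = x' ∧ (2 * t ≠ n → y = y') ∧ (2 * t = n → (1 + c) * y = (1 + c) * y') := by
  by_cases h2t : 2 * t = n
  · obtain ⟨n, rfl⟩ : ∃ l, n = l + 1 := ⟨n - 1, by omega⟩
    have hli := H.linearIndependent_pow_pow_mul_altProd a (b + 1) (m := n) (by omega) (by omega)
    rw [h2t, H.pow_mul_altProd_add_of_length_eq, smul_smul, smul_smul, mul_comm y, mul_comm y']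
    simp only [ne_eq, not_true_eq_false, false_implies, true_implies, true_and]
    exact ⟨hli.eq_of_pair, fun ⟨hx, hy⟩ => by rw [hx, hy]⟩
  · have hli := H.linearIndependent_pow_pow_mul_altProd_two_mul_add a b ht htn h2t
    simp only [ne_eq, h2t, not_false_eq_true, true_implies, false_implies, and_true]
    exact ⟨hli.eq_of_pair, fun ⟨hx, hy⟩ => by rw [hx, hy]⟩

theorem altComb_sq_eq_iff (H : IsAltPair p q c ν N n) {s t : ℕ} (hs : 1 ≤ s) (ht : Odd t)
    (htn : t < n) (x y x' y' : k) :
    altComb p q s t x y ^ 2 = altComb p q s t x' y' ^ 2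
      ↔ x ^ 2 + y ^ 2 = x' ^ 2 + y' ^ 2 ∧ (2 * t ≠ n → x * y = x' * y') ∧
        (2 * t = n → (1 + c) * (x * y) = (1 + c) * (x' * y')) := by
  obtain ⟨b, hb⟩ : ∃ b, 4 * s = b + 1 := ⟨4 * s - 1, by omega⟩
  rw [altComb_sq H.sq_eq_sq s ht, altComb_sq H.sq_eq_sq s ht, hb, add_right_comm]
  exact H.smul_pow_add_smul_eq_iff _ b ht.pos htn _ _ _ _

end IsAltPair

theorem chi_eq_altProd {A : Type*} [Ring A] (x : Fin 2 → Fin 2 → A) (i j : Fin 2) (m : ℕ) :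
    chi x i j m = altProd (x i j) (x (i + 1) (j + 1)) m := by
  have add_one_add_one (i : Fin 2) : i + 1 + 1 = i := by decide +revert
  induction m generalizing i j with
  | zero => rw [altProd_zero, chi]
  | succ m ih => rw [altProd_succ, chi, ih, add_one_add_one, add_one_add_one]

namespace Suzuki

variable {k A : Type*} [Field k] [CharZero k] [IsAlgClosed k] [Ring A] [HopfAlgebra k A]

theorem x_zero_zero_mul_x_zero_one (S : Suzuki k A) : S.x 0 0 * S.x 0 1 = 0 :=
  S.rel_odd 0 0 0 1 (by decide)

theorem x_zero_one_mul_x_zero_zero (S : Suzuki k A) : S.x 0 1 * S.x 0 0 = 0 :=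
  S.rel_odd 0 1 0 0 (by decide)

theorem μ_mul_self (S : Suzuki k A) : S.μ * S.μ = 1 := by
  rcases S.hμ with h | h <;> simp [h]

theorem lam_mul_self (S : Suzuki k A) : S.lam * S.lam = 1 := by
  rcases S.hlam with h | h <;> simp [h]

theorem two_mul_N_ne_zero (S : Suzuki k A) : 2 * S.N ≠ 0 := by
  have := S.hN
  omega

theorem x_zero_zero_pow_mul_self (S : Suzuki k A) :
    S.x 0 0 ^ (2 * S.N) * S.x 0 0 = S.x 0 0 := by
  simpa [add_mul, pow_mul_eq_zero_of_mul_eq_zero S.x_zero_one_mul_x_zero_zero S.two_mul_N_ne_zero]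
    using congrArg (· * S.x 0 0) S.rel_mu

theorem x_zero_one_pow_mul_self (S : Suzuki k A) :
    S.x 0 1 ^ (2 * S.N) * S.x 0 1 = S.μ • S.x 0 1 := by
  have h : S.μ • (S.x 0 1 ^ (2 * S.N) * S.x 0 1) = S.x 0 1 := by
    simpa [add_mul, pow_mul_eq_zero_of_mul_eq_zero S.x_zero_zero_mul_x_zero_one S.two_mul_N_ne_zero]
      using congrArg (· * S.x 0 1) S.rel_mu
  conv_rhs => rw [← h, smul_smul, S.μ_mul_self, one_smul]

theorem isAltPair_diagonal (S : Suzuki k A) :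
    IsAltPair (S.x 0 0) (S.x 1 1) (1 : k) 1 (2 * S.N) S.n where
  sq_eq_sq := S.rel_sq1
  N_pos := Nat.pos_of_ne_zero S.two_mul_N_ne_zero
  ν_ne_zero := one_ne_zero
  pow_succ_eq := by rw [pow_succ, S.x_zero_zero_pow_mul_self, one_smul]
  c_mul_self := one_mul 1
  altProd_eq := by simpa [chi_eq_altProd] using S.rel_chi2.symm
  linearIndependent := by
    simpa [Function.comp_def, chi_eq_altProd]
      using S.basis_indep.comp (fun i => (0, i)) (Prod.mk_right_injective 0)

theorem isAltPair_offDiagonal (S : Suzuki k A) :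
    IsAltPair (S.x 0 1) (S.x 1 0) S.lam S.μ (2 * S.N) S.n where
  sq_eq_sq := S.rel_sq2
  N_pos := Nat.pos_of_ne_zero S.two_mul_N_ne_zero
  ν_ne_zero := left_ne_zero_of_mul_eq_one S.μ_mul_self
  pow_succ_eq := by rw [pow_succ, S.x_zero_one_pow_mul_self]
  c_mul_self := S.lam_mul_self
  altProd_eq := by simpa [chi_eq_altProd] using S.rel_chi1
  linearIndependent := by
    simpa [Function.comp_def, chi_eq_altProd]
      using S.basis_indep.comp (fun i => (1, i)) (Prod.mk_right_injective 1)

theorem add_altComb_sq_eq_iff (S : Suzuki k A) {s : ℕ} (hs : 1 ≤ s) (t : ℕ)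
    (f₁ f₂ f₃ f₄ g₁ g₂ g₃ g₄ : k) :
    (altComb (S.x 0 0) (S.x 1 1) s t f₁ f₂ + altComb (S.x 0 1) (S.x 1 0) s t f₃ f₄) ^ 2
        = (altComb (S.x 0 0) (S.x 1 1) s t g₁ g₂ + altComb (S.x 0 1) (S.x 1 0) s t g₃ g₄) ^ 2
      ↔ altComb (S.x 0 0) (S.x 1 1) s t f₁ f₂ ^ 2 = altComb (S.x 0 0) (S.x 1 1) s t g₁ g₂ ^ 2 ∧
        altComb (S.x 0 1) (S.x 1 0) s t f₃ f₄ ^ 2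
          = altComb (S.x 0 1) (S.x 1 0) s t g₃ g₄ ^ 2 := by
  have hdiag (c d : k) : S.x 0 0 ^ (2 * S.N) * altComb (S.x 0 0) (S.x 1 1) s t c d
      = altComb (S.x 0 0) (S.x 1 1) s t c d := by
    obtain ⟨z, hz⟩ := dvd_altComb (S.x 0 0) (S.x 1 1) hs t c d
    rw [hz, ← mul_assoc, S.x_zero_zero_pow_mul_self]
  have hoff (c d : k) : S.x 0 0 ^ (2 * S.N) * altComb (S.x 0 1) (S.x 1 0) s t c d = 0 := by
    obtain ⟨z, hz⟩ := dvd_altComb (S.x 0 1) (S.x 1 0) hs t c d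
    rw [hz, ← mul_assoc, pow_mul_eq_zero_of_mul_eq_zero S.x_zero_zero_mul_x_zero_one
      S.two_mul_N_ne_zero, zero_mul]
  have hsq (c₁ c₂ c₃ c₄ : k) :
      (altComb (S.x 0 0) (S.x 1 1) s t c₁ c₂ + altComb (S.x 0 1) (S.x 1 0) s t c₃ c₄) ^ 2
        = altComb (S.x 0 0) (S.x 1 1) s t c₁ c₂ ^ 2
          + altComb (S.x 0 1) (S.x 1 0) s t c₃ c₄ ^ 2 :=
    add_sq_of_mul_eq_zero
      (altComb_mul_altComb_eq_zero S.rel_sq1 S.x_zero_zero_mul_x_zero_one hs ..)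
      (altComb_mul_altComb_eq_zero S.rel_sq2 S.x_zero_one_mul_x_zero_zero hs ..)
  rw [hsq, hsq]
  apply add_eq_add_iff_of_mul_eq (e := S.x 0 0 ^ (2 * S.N)) <;>
    simp only [sq, ← mul_assoc, hdiag, hoff, zero_mul]

theorem altComb_diagonal_sq_eq_iff (S : Suzuki k A) {s t : ℕ} (hs : 1 ≤ s) (ht : Odd t)
    (htn : t < S.n) (f₁ f₂ g₁ g₂ : k) :
    altComb (S.x 0 0) (S.x 1 1) s t f₁ f₂ ^ 2 = altComb (S.x 0 0) (S.x 1 1) s t g₁ g₂ ^ 2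
      ↔ f₁ ^ 2 + f₂ ^ 2 = g₁ ^ 2 + g₂ ^ 2 ∧ f₁ * f₂ = g₁ * g₂ := by
  have htwo : (1 + 1 : k) ≠ 0 := one_add_one_eq_two (R := k) ▸ two_ne_zero
  rw [S.isAltPair_diagonal.altComb_sq_eq_iff hs ht htn, mul_right_inj' htwo]
  tauto

theorem smul_add_smul_eq_add_altComb (S : Suzuki k A) (s t : ℕ) (f₁ f₂ f₃ f₄ : k) :
    f₁ • (S.x 0 0 ^ (2 * s) * chi S.x 0 0 t) + f₂ • (S.x 0 0 ^ (2 * s) * chi S.x 1 1 t)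
        + f₃ • (S.x 0 1 ^ (2 * s) * chi S.x 0 1 t) + f₄ • (S.x 0 1 ^ (2 * s) * chi S.x 1 0 t)
      = altComb (S.x 0 0) (S.x 1 1) s t f₁ f₂ + altComb (S.x 0 1) (S.x 1 0) s t f₃ f₄ := by
  simp [chi_eq_altProd, altComb, mul_add, add_assoc]

end Suzuki

theorem sq_add_one_sub_sq_eq_and_mul_eq_iff {R : Type*} [CommRing R] {a b : R} :
    a ^ 2 + (1 - a) ^ 2 = b ^ 2 + (1 - b) ^ 2 ∧ a * (1 - a) = b * (1 - b)
      ↔ (a - b) * (1 - a - b) = 0 := by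
  refine ⟨fun h => ?_, fun h => ⟨?_, ?_⟩⟩
  · linear_combination h.2
  · linear_combination -2 * h
  · linear_combination h

theorem sq_add_neg_sq_eq_and_mul_eq_iff {R : Type*} [CommRing R] {d e : R} :
    d ^ 2 + (-d) ^ 2 = e ^ 2 + (-e) ^ 2 ∧ d * -d = e * -e ↔ d ^ 2 = e ^ 2 := by
  refine ⟨fun h => ?_, fun h => ⟨?_, ?_⟩⟩
  · linear_combination -h.2
  · linear_combination 2 * h
  · linear_combination -h

theorem stmt6_general (k A : Type*) [Field k] [CharZero k] [IsAlgClosed k]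
    [Ring A] [HopfAlgebra k A] (S : Suzuki k A) {s t : ℕ} (hs : 1 ≤ s) (htn : t < S.n)
    (htodd : Odd t) (P Q R T : A)
    (hP : P = S.x 0 0 ^ (2 * s) * chi S.x 0 0 t)
    (hQ : Q = S.x 0 0 ^ (2 * s) * chi S.x 1 1 t)
    (hR : R = S.x 0 1 ^ (2 * s) * chi S.x 0 1 t)
    (hT : T = S.x 0 1 ^ (2 * s) * chi S.x 1 0 t)
    (f₁ f₂ f₃ f₄ g₁ g₂ g₃ g₄ : k) :
    (f₁ • P + f₂ • Q + f₃ • R + f₄ • T) ^ 2 = (g₁ • P + g₂ • Q + g₃ • R + g₄ • T) ^ 2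
      ↔ (f₁ ^ 2 + f₂ ^ 2 = g₁ ^ 2 + g₂ ^ 2 ∧ f₁ * f₂ = g₁ * g₂) ∧
        f₃ ^ 2 + f₄ ^ 2 = g₃ ^ 2 + g₄ ^ 2 ∧
        (2 * t ≠ S.n → f₃ * f₄ = g₃ * g₄) ∧
        (2 * t = S.n → (1 + S.lam) * (f₃ * f₄) = (1 + S.lam) * (g₃ * g₄)) := by
  rw [hP, hQ, hR, hT, S.smul_add_smul_eq_add_altComb, S.smul_add_smul_eq_add_altComb,
    S.add_altComb_sq_eq_iff hs, S.altComb_diagonal_sq_eq_iff hs htodd htn,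
    S.isAltPair_offDiagonal.altComb_sq_eq_iff hs htodd htn]

/-- t odd: criteria for `y² = z²` and `u² = v²`. -/
theorem stmt6 (k A : Type*) [Field k] [CharZero k] [IsAlgClosed k]
    [Ring A] [HopfAlgebra k A] (S : Suzuki k A)
    (s t : ℕ) (hs1 : 1 ≤ s) (hs2 : s ≤ S.N) (ht1 : 1 ≤ t) (ht2 : t ≤ S.n - 1)
    (htodd : Odd t)
    (P Q R T : A)
    (hP : P = S.x 0 0 ^ (2 * s) * chi S.x 0 0 t)
    (hQ : Q = S.x 0 0 ^ (2 * s) * chi S.x 1 1 t)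
    (hR : R = S.x 0 1 ^ (2 * s) * chi S.x 0 1 t)
    (hT : T = S.x 0 1 ^ (2 * s) * chi S.x 1 0 t)
    (a1 a2 a3 b1 b2 b3 d1 d2 d3 e1 e2 e3 : k) :
    ((a1 • P + (1 - a1) • Q + a2 • R + a3 • T) ^ 2
        = (b1 • P + (1 - b1) • Q + b2 • R + b3 • T) ^ 2
      ↔ (a1 - b1) * (1 - a1 - b1) = 0 ∧ a2 ^ 2 + a3 ^ 2 = b2 ^ 2 + b3 ^ 2 ∧
        (2 * t ≠ S.n → a2 * a3 = b2 * b3) ∧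
        (2 * t = S.n → (1 + S.lam) * (a2 * a3) = (1 + S.lam) * (b2 * b3)))
    ∧ ((d1 • P - d1 • Q + d2 • R + d3 • T) ^ 2
        = (e1 • P - e1 • Q + e2 • R + e3 • T) ^ 2
      ↔ d1 ^ 2 = e1 ^ 2 ∧ d2 ^ 2 + d3 ^ 2 = e2 ^ 2 + e3 ^ 2 ∧
        (2 * t ≠ S.n → d2 * d3 = e2 * e3) ∧
        (2 * t = S.n → (1 + S.lam) * (d2 * d3) = (1 + S.lam) * (e2 * e3))) := by
  have criterion := stmt6_general k A S hs1 (show t < S.n by omega) htodd P Q R T hP hQ hR hT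
  constructor
  · rw [criterion, sq_add_one_sub_sq_eq_and_mul_eq_iff]
  · simp only [sub_eq_add_neg, ← neg_smul, criterion, sq_add_neg_sq_eq_and_mul_eq_iff]
end
end

section
/- Let 1 ≤ s ≤ N, 1 ≤ t ≤ n − 1 with t odd, and set P = x11^{2s}χ11^t, Q = x11^{2s}χ22^t, R = x12^{2s}χ12^t, T = x12^{2s}χ21^t in A = A_{Nn}^{μλ}. For scalars a1, a2, a3, b1, b2, b3, d1, d2, d3, e1, e2, e3 ∈ k put y = a1·P + (1−a1)·Q + a2·R + a3·T, z = b1·P + (1−b1)·Q + b2·R + b3·T, u = d1·P − d1·Q + d2·R + d3·T, v = e1·P − e1·Q + e2·R + e3·T. Then: (i) y·u = 0 iff (1−2a1)d1 = 0, a2d2 + a3d3 = 0, and, when 2t ≠ n, also d1 = 0, a2d3 = 0, a3d2 = 0, while when 2t = n, also a2d3 + λ·a3d2 = 0; (ii) z·u = 0 iff the same conditions hold with (a1,a2,a3) replaced by (b1,b2,b3); (iii) y·v = 0 iff the conditions of (i) hold with (d1,d2,d3) replaced by (e1,e2,e3); (iv) z·v = 0 iff the conditions of (i) hold with (a1,a2,a3)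 replaced by (b1,b2,b3) and (d1,d2,d3) replaced by (e1,e2,e3). -/
/-! The generators form two families, `(x₁₁, x₂₂)` and `(x₁₂, x₂₁)`, which annihilate each other, so
`y * u` is the sum of one product per family. Since `1 = x₁₁^(2N) + μ x₁₂^(2N)`, such a sum vanishes
only if both summands do.

Write `(a, b)` for one family. As `a² = b²` is central among words in `a` and `b`, an alternating
word of odd length `t` has square `a^(2t)`, while the products of the two different words of length
`t` are the alternating words of length `2t`. For `2t < n` these two and the power of `a` are
multiples of distinct basis vectors. For `2t > n` the relation between the two words of length `n`
folds length `2t = n + r` back to `n - r`, with the same effect. For `2t = n` it makes the two words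
of length `2t` proportional, and only two independent vectors remain. -/

open scoped TensorProduct

noncomputable section

section AlternatingWords

variable {M : Type*} [Monoid M] {a b : M}

/-- The alternating word `a * b * a * ⋯` with `m` letters, the first of which is `a`. It is `chi`
for an arbitrary pair of letters, so that the two letters can be exchanged freely. -/
def altWord (a b : M) : ℕ → M
  | 0 => 1
  | m + 1 => a * altWord b a m

lemma chi_eq_altWord {A : Type*} [Ring A] (x : Fin 2 → Fin 2 → A) (i j : Fin 2) (m : ℕ) :
    chi x i j m = altWord (x i j) (x (i + 1) (j + 1)) m := by
  induction m generalizing i j with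
  | zero => rfl
  | succ m ih =>
    have add_one_add_one : ∀ i : Fin 2, i + 1 + 1 = i := by decide
    rw [chi, altWord, ih, add_one_add_one, add_one_add_one]

lemma altWord_zero (a b : M) : altWord a b 0 = 1 := rfl

lemma altWord_succ (a b : M) (m : ℕ) : altWord a b (m + 1) = a * altWord b a m := rfl

lemma altWord_add_of_odd (a b : M) {t : ℕ} (ht : Odd t) (m : ℕ) :
    altWord a b (t + m) = altWord a b t * altWord b a m := by
  obtain ⟨j, rfl⟩ := ht
  induction j with
  | zero => simp [Nat.add_comm 1 m, altWord]
  | succ j ih =>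
    rw [show 2 * (j + 1) + 1 + m = 2 * j + 1 + m + 1 + 1 by ring,
      show 2 * (j + 1) + 1 = 2 * j + 1 + 1 + 1 by ring, altWord_succ, altWord_succ, ih,
      altWord_succ a b (_ + 1), altWord_succ b a (2 * j + 1), mul_assoc, mul_assoc]

lemma altWord_mul_swap (a b : M) {t : ℕ} (ht : Odd t) :
    altWord a b t * altWord b a t = altWord a b (2 * t) := by
  rw [two_mul, altWord_add_of_odd a b ht]

lemma commute_altWord {z : M} (hza : Commute z a) (hzb : Commute z b) (m : ℕ) :
    Commute z (altWord a b m) := by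
  induction m generalizing a b with
  | zero => exact Commute.one_right z
  | succ m ih => exact hza.mul_right (ih hzb hza)

lemma commute_pow_two_mul_altWord (hab : a ^ 2 = b ^ 2) (w m : ℕ) :
    Commute (a ^ (2 * w)) (altWord a b m) := by
  rw [pow_mul]
  exact (commute_altWord (Commute.pow_self a 2) (hab ▸ Commute.pow_self b 2) m).pow_left w

lemma altWord_sq_of_odd (hab : a ^ 2 = b ^ 2) {t : ℕ} (ht : Odd t) :
    altWord a b t ^ 2 = a ^ (2 * t) := by
  obtain ⟨j, rfl⟩ := ht
  induction j generalizing a b with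
  | zero => simp [altWord]
  | succ j ih =>
    set W := altWord b a (2 * j + 1)
    have palindrome : altWord a b (2 * (j + 1) + 1) = a * W * a :=
      calc a * altWord b a (2 * j + 1 + 1) = a * (W * altWord a b 1) := by
            rw [altWord_add_of_odd b a ⟨j, rfl⟩]
        _ = a * W * a := by rw [altWord_succ, altWord_zero, mul_one, mul_assoc]
    have hWa : Commute (a ^ 2) W := by
      rw [hab]; simpa using commute_pow_two_mul_altWord hab.symm 1 (2 * j + 1)
    calc altWord a b (2 * (j + 1) + 1) ^ 2 = a * (W * a ^ 2) * (W * a) := by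
          simp only [palindrome, pow_two, mul_assoc]
      _ = a ^ 3 * W ^ 2 * a := by rw [← hWa.eq, pow_succ' a 2, pow_two W]; simp only [mul_assoc]
      _ = a ^ 3 * a ^ (2 * (2 * j + 1)) * a := by
          rw [ih hab.symm, pow_mul b, ← hab, ← pow_mul]
      _ = a ^ (2 * (2 * (j + 1) + 1)) := by rw [← pow_add, ← pow_succ]; ring_nf

/-- The letters beyond the `n`-th cancel in pairs. -/
lemma altWord_add_eq_smul {k : Type*} [SMul k M] [SMulCommClass k M M] {l : k} {n : ℕ}
    (hab : a ^ 2 = b ^ 2) (h : altWord a b n = l • altWord b a n)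
    (h' : altWord b a n = l • altWord a b n) {r : ℕ} (hr : r ≤ n) :
    altWord a b (n + r) = l • (a ^ (2 * r) * altWord b a (n - r)) := by
  induction r generalizing a b with
  | zero => simpa using h
  | succ r ih =>
    have hn : n - r = n - (r + 1) + 1 := by omega
    calc altWord a b (n + r + 1) = a * altWord b a (n + r) := altWord_succ ..
      _ = l • (a * (b ^ (2 * r) * altWord a b (n - r))) := by
          rw [ih hab.symm h' h (by omega), mul_smul_comm]
      _ = l • (a * (a ^ (2 * r) * (a * altWord b a (n - (r + 1))))) := by
          rw [pow_mul b, ← hab, ← pow_mul, hn, altWord_succ]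
      _ = l • (a ^ (2 * (r + 1)) * altWord b a (n - (r + 1))) := by
          rw [← mul_assoc (a ^ _), ← pow_succ, ← mul_assoc, ← pow_succ', mul_add]

end AlternatingWords

lemma altWord_mul_eq_zero {M : Type*} [MonoidWithZero M] {a b c : M} (ha : a * c = 0)
    (hb : b * c = 0) {m : ℕ} (hm : 1 ≤ m) : altWord a b m * c = 0 := by
  induction m, hm using Nat.le_induction generalizing a b with
  | base => simpa [altWord] using ha
  | succ m _ ih => rw [altWord_succ, mul_assoc, ih hb ha, mul_zero]

section OrthogonalPowers

variable {k A : Type*} [CommSemiring k] [Semiring A] [Algebra k A] {a c : A} {α β : k} {M : ℕ}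

lemma smul_pow_succ_eq_self (hM : M ≠ 0) (h : α • a ^ M + β • c ^ M = 1) (hac : a * c = 0) :
    α • a ^ (M + 1) = a := by
  have hacM : a * c ^ M = 0 := by
    rw [← Nat.succ_pred hM, pow_succ', ← mul_assoc, hac, zero_mul]
  calc α • a ^ (M + 1) = a * (α • a ^ M + β • c ^ M) := by
        rw [mul_add, mul_smul_comm, mul_smul_comm, hacM, smul_zero, add_zero, pow_succ']
    _ = a := by rw [h, mul_one]

lemma add_eq_zero_iff_of_pow_add_pow_eq_one (hM : M ≠ 0) (h : α • a ^ M + β • c ^ M = 1)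
    {U V : A} (hU : c * U = 0) (hV : a * V = 0) : U + V = 0 ↔ U = 0 ∧ V = 0 := by
  have pow_mul_eq_zero {x W : A} (hW : x * W = 0) : x ^ M * W = 0 := by
    rw [← Nat.succ_pred hM, pow_succ, mul_assoc, hW, mul_zero]
  refine ⟨fun hUV => ?_, fun ⟨hU0, hV0⟩ => by rw [hU0, hV0, add_zero]⟩
  have haU : a * U = 0 := by simpa [mul_add, hV] using congrArg (a * ·) hUV
  have hU0 : U = 0 := by
    rw [← one_mul U, ← h, add_mul, smul_mul_assoc, smul_mul_assoc, pow_mul_eq_zero haU,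
      pow_mul_eq_zero hU, smul_zero, smul_zero, add_zero]
  exact ⟨hU0, by simpa [hU0] using hUV⟩

end OrthogonalPowers

section FamilyElements

variable {k A : Type*} [CommRing k] [Ring A] [Algebra k A] {a b c d : A}

/-- The element `p P + q Q` of the family with letters `a` and `b`, where `P` and `Q` are `a^(2s)`
times the alternating words of length `t` that start with `a` and `b`. -/
def familyElement (a b : A) (s t : ℕ) (p q : k) : A :=
  a ^ (2 * s) * (p • altWord a b t + q • altWord b a t)

lemma familyElement_mul (hab : a ^ 2 = b ^ 2) (s : ℕ) {t : ℕ} (ht : Odd t) (p q p' q' : k) :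
    familyElement a b s t p q * familyElement a b s t p' q' =
      a ^ (2 * (2 * s)) * ((p * p' + q * q') • a ^ (2 * t) + (p * q') • altWord a b (2 * t)
        + (q * p') • altWord b a (2 * t)) := by
  have pow_eq (w : ℕ) : a ^ (2 * w) = b ^ (2 * w) := by rw [pow_mul, hab, pow_mul]
  have hcomm : Commute (a ^ (2 * s)) (p • altWord a b t + q • altWord b a t) := by
    refine ((commute_pow_two_mul_altWord hab s t).smul_right p).add_right (.smul_right ?_ q)
    exact pow_eq s ▸ commute_pow_two_mul_altWord hab.symm s t
  calc familyElement a b s t p q * familyElement a b s t p' q'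
      = a ^ (2 * s) * a ^ (2 * s) * ((p • altWord a b t + q • altWord b a t)
          * (p' • altWord a b t + q' • altWord b a t)) := by
        simp only [familyElement]
        rw [hcomm.symm.mul_mul_mul_comm]
    _ = a ^ (2 * (2 * s)) * ((p * p') • altWord a b t ^ 2 + (p * q') • altWord a b (2 * t)
          + (q * p') • altWord b a (2 * t) + (q * q') • altWord b a t ^ 2) := by
        rw [← pow_add, ← altWord_mul_swap a b ht, ← altWord_mul_swap b a ht]
        simp only [add_mul, mul_add, smul_mul_smul_comm, pow_two, two_mul]
        abel
    _ = _ := by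
        rw [altWord_sq_of_odd hab ht, altWord_sq_of_odd hab.symm ht, ← pow_eq]
        congr 1
        module

lemma familyElement_mul_eq_zero (hac : a * c = 0) (hbc : b * c = 0) {s s' t t' : ℕ} (hs' : 1 ≤ s')
    (ht : 1 ≤ t) (p q p' q' : k) :
    familyElement a b s t p q * familyElement c d s' t' p' q' = 0 := by
  have hword : (p • altWord a b t + q • altWord b a t) * c = 0 := by
    rw [add_mul, smul_mul_assoc, smul_mul_assoc, altWord_mul_eq_zero hac hbc ht,
      altWord_mul_eq_zero hbc hac ht, smul_zero, smul_zero, add_zero]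
  obtain ⟨r, hr⟩ : ∃ r, 2 * s' = r + 1 := ⟨2 * s' - 1, by omega⟩
  rw [familyElement, familyElement, hr, pow_succ', mul_assoc, mul_assoc c, ← mul_assoc _ c, hword,
    zero_mul, mul_zero]

lemma mul_familyElement_eq_zero (hca : c * a = 0) {s : ℕ} (hs : 1 ≤ s) (t : ℕ) (p q : k) :
    c * familyElement a b s t p q = 0 := by
  obtain ⟨r, hr⟩ : ∃ r, 2 * s = r + 1 := ⟨2 * s - 1, by omega⟩
  rw [familyElement, hr, pow_succ', ← mul_assoc, ← mul_assoc, hca, zero_mul, zero_mul]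

end FamilyElements

/-- What is needed of one family of generators, `(a, b) = (x₁₁, x₂₂)` with `l = 1` or
`(a, b) = (x₁₂, x₂₁)` with `l = λ`, in order to compute with its alternating words; `M` is `2N`. -/
structure IsAlternatingPair {k A : Type*} [CommRing k] [Ring A] [Algebra k A] (l : k) (M n : ℕ)
    (a b : A) : Prop where
  pos : 0 < M
  sq_scalar : l ^ 2 = 1
  sq_eq : a ^ 2 = b ^ 2
  altWord_eq : altWord b a n = l • altWord a b n
  exists_smul_pow_eq : ∃ ν : kˣ, ν • a ^ (M + 1) = a
  linearIndependent : LinearIndependent k fun p : Fin M × Fin n =>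
    a ^ ((p.1 : ℕ) + 1) * altWord b a p.2

namespace IsAlternatingPair

variable {k A : Type*} [CommRing k] [Ring A] [Algebra k A] {l : k} {M n : ℕ} {a b : A}

lemma altWord_eq_symm (h : IsAlternatingPair l M n a b) : altWord a b n = l • altWord b a n := by
  rw [h.altWord_eq, smul_smul, ← pow_two, h.sq_scalar, one_smul]

lemma exists_smul_pow_eq_pow (h : IsAlternatingPair l M n a b) {p : ℕ} (hp : 1 ≤ p) :
    ∃ (ν : kˣ) (q : Fin M), ν • a ^ ((q : ℕ) + 1) = a ^ p := by
  obtain ⟨ν, hν⟩ := h.exists_smul_pow_eq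
  have pow_add_mul (r j : ℕ) : ν ^ j • a ^ (r + 1 + M * j) = a ^ (r + 1) := by
    induction j with
    | zero => simp
    | succ j ih =>
      calc ν ^ (j + 1) • a ^ (r + 1 + M * (j + 1))
          = ν ^ j • (a ^ (r + M * j) * (ν • a ^ (M + 1))) := by
            rw [mul_smul_comm, smul_smul, ← pow_succ, ← pow_add]; ring_nf
        _ = a ^ (r + 1) := by rw [hν, ← pow_succ, add_right_comm, ih]
  refine ⟨(ν ^ ((p - 1) / M))⁻¹, ⟨(p - 1) % M, Nat.mod_lt _ h.pos⟩, ?_⟩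
  rw [inv_smul_eq_iff, ← pow_add_mul _ ((p - 1) / M), add_right_comm, Nat.mod_add_div,
    Nat.sub_add_cancel hp]

lemma linearIndependent_pow_mul_altWord (h : IsAlternatingPair l M n a b) {ι : Type*}
    {p m : ι → ℕ} (hp : ∀ i, 1 ≤ p i) (hmn : ∀ i, m i < n) (hm : Function.Injective m) :
    LinearIndependent k fun i => a ^ p i * altWord b a (m i) := by
  choose ν q hq using fun i => h.exists_smul_pow_eq_pow (hp i)
  have hinj : Function.Injective fun i => (q i, (⟨m i, hmn i⟩ : Fin n)) :=
    fun i j hij => hm (by simpa using congrArg (fun x => (x.2 : ℕ)) hij)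
  convert (h.linearIndependent.comp _ hinj).units_smul ν using 1
  funext i
  simp [← hq i, smul_mul_assoc]

lemma linearIndependent_pow_altWord (h : IsAlternatingPair l M n a b) {v w m : ℕ} (hv : 1 ≤ v)
    (hm : 2 ≤ m) (hmn : m ≤ n) :
    LinearIndependent k ![a ^ v, a ^ w * altWord a b m] := by
  have hli := h.linearIndependent_pow_mul_altWord (p := ![v, w + 1]) (m := ![0, m - 1])
    (Fin.forall_fin_two.mpr ⟨hv, Nat.le_add_left 1 w⟩)
    (Fin.forall_fin_two.mpr ⟨show 0 < n by omega, show m - 1 < n by omega⟩)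
    (Fin.strictMono_iff_lt_succ.mpr (Fin.forall_fin_one.mpr (show 0 < m - 1 by omega))).injective
  have hword : a ^ w * altWord a b m = a ^ (w + 1) * altWord b a (m - 1) := by
    rw [pow_succ, mul_assoc, ← altWord_succ, Nat.sub_add_cancel (by omega)]
  convert hli using 1
  funext i
  fin_cases i <;> simp [hword, altWord_zero]

lemma linearIndependent_pow_altWord_altWord (h : IsAlternatingPair l M n a b) {v w m : ℕ}
    (hv : 1 ≤ v) (hw : 1 ≤ w) (hm : 2 ≤ m) (hmn : m < n) :
    LinearIndependent k ![a ^ v, a ^ w * altWord a b m, a ^ w * altWord b a m] := by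
  have hli := h.linearIndependent_pow_mul_altWord (p := ![v, w + 1, w]) (m := ![0, m - 1, m])
    (by simp [Fin.forall_fin_succ, hv, hw])
    (Fin.forall_fin_succ.mpr ⟨show 0 < n by omega,
      Fin.forall_fin_two.mpr ⟨show m - 1 < n by omega, hmn⟩⟩)
    (Fin.strictMono_iff_lt_succ.mpr (Fin.forall_fin_two.mpr
      ⟨show 0 < m - 1 by omega, show m - 1 < m by omega⟩)).injective
  have hword : a ^ w * altWord a b m = a ^ (w + 1) * altWord b a (m - 1) := by
    rw [pow_succ, mul_assoc, ← altWord_succ, Nat.sub_add_cancel (by omega)]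
  convert hli using 1
  funext i
  fin_cases i <;> simp [hword, altWord_zero]

lemma smul_pow_add_smul_altWord_eq_zero_iff (h : IsAlternatingPair l M n a b) {v w m : ℕ}
    (hv : 1 ≤ v) (hw : 1 ≤ w) (hm : 2 ≤ m) (hmn : m < n) {α β γ : k} :
    α • a ^ v + β • (a ^ w * altWord a b m) + γ • (a ^ w * altWord b a m) = 0 ↔
      α = 0 ∧ β = 0 ∧ γ = 0 := by
  refine ⟨fun h0 => ?_, fun ⟨hα, hβ, hγ⟩ => by simp [hα, hβ, hγ]⟩
  have hcoeff := Fintype.linearIndependent_iff.mp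
    (h.linearIndependent_pow_altWord_altWord hv hw hm hmn) ![α, β, γ]
    (by simpa [Fin.sum_univ_three] using h0)
  exact ⟨hcoeff 0, hcoeff 1, hcoeff 2⟩

section Criterion

variable {w t : ℕ} {α β γ : k}

lemma altWord_combination_eq_zero_iff_of_eq (h : IsAlternatingPair l M n a b) (ht : 1 ≤ t)
    (htn : 2 * t = n) :
    a ^ (2 * w) * (α • a ^ (2 * t) + β • altWord a b (2 * t) + γ • altWord b a (2 * t)) = 0 ↔
      α = 0 ∧ β + l * γ = 0 := by
  have hcomb : a ^ (2 * w) * (α • a ^ (2 * t) + β • altWord a b (2 * t)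
      + γ • altWord b a (2 * t)) =
      α • a ^ (2 * w + 2 * t) + (β + l * γ) • (a ^ (2 * w) * altWord a b n) := by
    rw [htn, h.altWord_eq, pow_add]
    simp only [mul_add, mul_smul_comm]
    module
  have hli := h.linearIndependent_pow_altWord (v := 2 * w + 2 * t) (w := 2 * w) (m := n)
    (by omega) (by omega) le_rfl
  rw [hcomb]
  exact ⟨LinearIndependent.pair_iff.mp hli _ _, fun ⟨hα, hβγ⟩ => by simp [hα, hβγ]⟩

lemma altWord_combination_eq_zero_iff_of_ne (h : IsAlternatingPair l M n a b) (hw : 1 ≤ w)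
    (ht : 1 ≤ t) (htn : t < n) (hne : 2 * t ≠ n) :
    a ^ (2 * w) * (α • a ^ (2 * t) + β • altWord a b (2 * t) + γ • altWord b a (2 * t)) = 0 ↔
      α = 0 ∧ β = 0 ∧ γ = 0 := by
  simp only [mul_add, mul_smul_comm, ← pow_add]
  rcases lt_or_gt_of_ne hne with hlt | hgt
  · exact h.smul_pow_add_smul_altWord_eq_zero_iff (by omega) (by omega) (by omega) hlt
  · obtain ⟨r, hr⟩ : ∃ r, 2 * t = n + r := ⟨2 * t - n, by omega⟩
    have hl : IsUnit l := IsUnit.of_pow_eq_one h.sq_scalar two_ne_zero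
    have hba : a ^ (2 * w) * altWord b a (2 * t) =
        l • (a ^ (2 * w + 2 * r) * altWord a b (n - r)) := by
      rw [hr, altWord_add_eq_smul h.sq_eq.symm h.altWord_eq h.altWord_eq_symm (by omega),
        mul_smul_comm, pow_mul b, ← h.sq_eq, ← pow_mul, pow_add, mul_assoc]
    have hab : a ^ (2 * w) * altWord a b (2 * t) =
        l • (a ^ (2 * w + 2 * r) * altWord b a (n - r)) := by
      rw [hr, altWord_add_eq_smul h.sq_eq h.altWord_eq_symm h.altWord_eq (by omega), mul_smul_comm,
        pow_add, mul_assoc]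
    rw [hab, hba, smul_smul, smul_smul, add_right_comm,
      h.smul_pow_add_smul_altWord_eq_zero_iff (by omega) (by omega) (by omega) (by omega),
      hl.mul_left_eq_zero, hl.mul_left_eq_zero, and_comm (a := γ = 0)]

lemma familyElement_mul_eq_zero_iff (h : IsAlternatingPair l M n a b) {s : ℕ} (hs : 1 ≤ s)
    (ht : Odd t) (htn : t < n) {p q p' q' : k} :
    familyElement a b s t p q * familyElement a b s t p' q' = 0 ↔
      p * p' + q * q' = 0 ∧ (2 * t ≠ n → p * q' = 0 ∧ q * p' = 0) ∧
        (2 * t = n → p * q' + l * (q * p') = 0) := by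
  rw [familyElement_mul h.sq_eq s ht]
  by_cases h2t : 2 * t = n
  · rw [h.altWord_combination_eq_zero_iff_of_eq ht.pos h2t]
    simp [h2t]
  · rw [h.altWord_combination_eq_zero_iff_of_ne (by omega) ht.pos htn h2t]
    simp [h2t]

end Criterion

end IsAlternatingPair

/-- The algebra relations and the independent words of the Suzuki Hopf algebra `A_{Nn}^{μλ}`, over
any commutative ring and without coalgebra structure; the indices of `x` are those of `Suzuki`.
The field `linearIndependent` only asks for independence within each of the two families. -/
structure SuzukiRelations {k A : Type*} [CommRing k] [Ring A] [Algebra k A] (N n : ℕ) (μ lam : k)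
    (x : Fin 2 → Fin 2 → A) : Prop where
  pos : 0 < N
  isUnit_mu : IsUnit μ
  sq_lam : lam ^ 2 = 1
  sq_eq (j : Fin 2) : x 0 j ^ 2 = x 1 (j + 1) ^ 2
  chi_eq : chi x 0 0 n = chi x 1 1 n
  chi_eq_smul : chi x 1 0 n = lam • chi x 0 1 n
  pow_add_smul_pow : x 0 0 ^ (2 * N) + μ • x 0 1 ^ (2 * N) = 1
  mul_eq_zero (i j i' j' : Fin 2) : Odd ((i : ℕ) + j + i' + j') → x i j * x i' j' = 0
  linearIndependent (j : Fin 2) : LinearIndependent k fun p : Fin (2 * N) × Fin n =>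
    x 0 j ^ ((p.1 : ℕ) + 1) * chi x 1 (j + 1) p.2

namespace SuzukiRelations

variable {k A : Type*} [CommRing k] [Ring A] [Algebra k A] {N n : ℕ} {μ lam : k}
  {x : Fin 2 → Fin 2 → A}

lemma one_smul_pow_add (h : SuzukiRelations N n μ lam x) :
    (1 : k) • x 0 0 ^ (2 * N) + μ • x 0 1 ^ (2 * N) = 1 := by
  rw [one_smul, h.pow_add_smul_pow]

lemma isAlternatingPair_zero (h : SuzukiRelations N n μ lam x) :
    IsAlternatingPair (1 : k) (2 * N) n (x 0 0) (x 1 1) where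
  pos := Nat.mul_pos two_pos h.pos
  sq_scalar := one_pow 2
  sq_eq := h.sq_eq 0
  altWord_eq := by simpa [chi_eq_altWord] using h.chi_eq.symm
  exists_smul_pow_eq := ⟨1, by
    simpa using smul_pow_succ_eq_self (mul_ne_zero two_ne_zero h.pos.ne')
      h.one_smul_pow_add (h.mul_eq_zero 0 0 0 1 (by decide))⟩
  linearIndependent := by simpa [chi_eq_altWord] using h.linearIndependent 0

lemma isAlternatingPair_one (h : SuzukiRelations N n μ lam x) :
    IsAlternatingPair lam (2 * N) n (x 0 1) (x 1 0) where
  pos := Nat.mul_pos two_pos h.pos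
  sq_scalar := h.sq_lam
  sq_eq := h.sq_eq 1
  altWord_eq := by simpa [chi_eq_altWord] using h.chi_eq_smul
  exists_smul_pow_eq := ⟨h.isUnit_mu.unit, by
    simpa [Units.smul_def] using smul_pow_succ_eq_self (mul_ne_zero two_ne_zero h.pos.ne')
      ((add_comm _ _).trans h.one_smul_pow_add) (h.mul_eq_zero 0 1 0 0 (by decide))⟩
  linearIndependent := by simpa [chi_eq_altWord] using h.linearIndependent 1

lemma add_mul_add_eq_zero_iff (h : SuzukiRelations N n μ lam x) {s t : ℕ} (hs : 1 ≤ s)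
    (ht : Odd t) (htn : t < n) {p q p' q' r m r' m' : k} :
    (familyElement (x 0 0) (x 1 1) s t p q + familyElement (x 0 1) (x 1 0) s t r m) *
        (familyElement (x 0 0) (x 1 1) s t p' q' + familyElement (x 0 1) (x 1 0) s t r' m') = 0 ↔
      (p * p' + q * q' = 0 ∧ (2 * t ≠ n → p * q' = 0 ∧ q * p' = 0) ∧
        (2 * t = n → p * q' + q * p' = 0)) ∧
      r * r' + m * m' = 0 ∧ (2 * t ≠ n → r * m' = 0 ∧ m * r' = 0) ∧
        (2 * t = n → r * m' + lam * (m * r') = 0) := by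
  have hac := h.mul_eq_zero 0 0 0 1 (by decide)
  have hbc := h.mul_eq_zero 1 1 0 1 (by decide)
  have hca := h.mul_eq_zero 0 1 0 0 (by decide)
  have hda := h.mul_eq_zero 1 0 0 0 (by decide)
  rw [add_mul, mul_add, mul_add, familyElement_mul_eq_zero hac hbc hs ht.pos,
    familyElement_mul_eq_zero hca hda hs ht.pos, add_zero, zero_add,
    add_eq_zero_iff_of_pow_add_pow_eq_one (mul_ne_zero two_ne_zero h.pos.ne') h.one_smul_pow_add
      (by rw [← mul_assoc, mul_familyElement_eq_zero hca hs, zero_mul])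
      (by rw [← mul_assoc, mul_familyElement_eq_zero hac hs, zero_mul]),
    h.isAlternatingPair_zero.familyElement_mul_eq_zero_iff hs ht htn,
    h.isAlternatingPair_one.familyElement_mul_eq_zero_iff hs ht htn, one_mul (q * p')]

end SuzukiRelations

lemma Suzuki.suzukiRelations {k A : Type*} [Field k] [CharZero k] [IsAlgClosed k] [Ring A]
    [HopfAlgebra k A] (S : Suzuki k A) : SuzukiRelations S.N S.n S.μ S.lam S.x where
  pos := S.hN
  isUnit_mu := by rcases S.hμ with h | h <;> simp [h]
  sq_lam := sq_eq_one_iff.mpr S.hlam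
  sq_eq := Fin.forall_fin_two.mpr ⟨S.rel_sq1, S.rel_sq2⟩
  chi_eq := S.rel_chi2
  chi_eq_smul := S.rel_chi1
  pow_add_smul_pow := S.rel_mu
  mul_eq_zero := S.rel_odd
  linearIndependent j := by
    have hli := S.basis_indep.comp (fun p : Fin (2 * S.N) × Fin S.n => (j, p))
      (Prod.mk_right_injective j)
    fin_cases j <;> simpa [Function.comp_def] using hli

theorem stmt7_general {k A : Type*} [CommRing k] [Ring A] [Algebra k A] {N n : ℕ} {μ lam : k}
    {x : Fin 2 → Fin 2 → A} (h : SuzukiRelations N n μ lam x)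
    {s t : ℕ} (hs : 1 ≤ s) (ht : Odd t) (htn : t < n) {P Q R T : A}
    (hP : P = x 0 0 ^ (2 * s) * chi x 0 0 t) (hQ : Q = x 0 0 ^ (2 * s) * chi x 1 1 t)
    (hR : R = x 0 1 ^ (2 * s) * chi x 0 1 t) (hT : T = x 0 1 ^ (2 * s) * chi x 1 0 t)
    (a1 a2 a3 d1 d2 d3 : k) :
    (a1 • P + (1 - a1) • Q + a2 • R + a3 • T) * (d1 • P - d1 • Q + d2 • R + d3 • T) = 0 ↔
      (1 - 2 * a1) * d1 = 0 ∧ a2 * d2 + a3 * d3 = 0 ∧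
      (2 * t ≠ n → d1 = 0 ∧ a2 * d3 = 0 ∧ a3 * d2 = 0) ∧
      (2 * t = n → a2 * d3 + lam * (a3 * d2) = 0) := by
  have hfamilies (p q r m : k) : p • P + q • Q + r • R + m • T =
      familyElement (x 0 0) (x 1 1) s t p q + familyElement (x 0 1) (x 1 0) s t r m := by
    simp [hP, hQ, hR, hT, familyElement, chi_eq_altWord, mul_add, add_assoc]
  have hdiag : a1 * d1 + (1 - a1) * -d1 = -((1 - 2 * a1) * d1) := by ring
  have hcross : a1 * -d1 + (1 - a1) * d1 = (1 - 2 * a1) * d1 := by ring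
  have hd1 : a1 * -d1 = 0 ∧ (1 - a1) * d1 = 0 ↔ d1 = 0 :=
    ⟨fun ⟨h₁, h₂⟩ => by linear_combination h₂ - h₁, fun hd => by simp [hd]⟩
  rw [sub_eq_add_neg (d1 • P), ← neg_smul, hfamilies, hfamilies,
    h.add_mul_add_eq_zero_iff hs ht htn, hdiag, hcross, hd1, neg_eq_zero]
  tauto

/-- t odd: criteria for `y·u = 0`, `z·u = 0`, `y·v = 0`, `z·v = 0`. -/
theorem stmt7 (k A : Type*) [Field k] [CharZero k] [IsAlgClosed k]
    [Ring A] [HopfAlgebra k A] (S : Suzuki k A)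
    (s t : ℕ) (hs1 : 1 ≤ s) (hs2 : s ≤ S.N) (ht1 : 1 ≤ t) (ht2 : t ≤ S.n - 1)
    (htodd : Odd t)
    (P Q R T : A)
    (hP : P = S.x 0 0 ^ (2 * s) * chi S.x 0 0 t)
    (hQ : Q = S.x 0 0 ^ (2 * s) * chi S.x 1 1 t)
    (hR : R = S.x 0 1 ^ (2 * s) * chi S.x 0 1 t)
    (hT : T = S.x 0 1 ^ (2 * s) * chi S.x 1 0 t)
    (a1 a2 a3 b1 b2 b3 d1 d2 d3 e1 e2 e3 : k)
    (y z u v : A)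
    (hy : y = a1 • P + (1 - a1) • Q + a2 • R + a3 • T)
    (hz : z = b1 • P + (1 - b1) • Q + b2 • R + b3 • T)
    (hu : u = d1 • P - d1 • Q + d2 • R + d3 • T)
    (hv : v = e1 • P - e1 • Q + e2 • R + e3 • T) :
    (y * u = 0
      ↔ (1 - 2 * a1) * d1 = 0 ∧ a2 * d2 + a3 * d3 = 0 ∧
        (2 * t ≠ S.n → d1 = 0 ∧ a2 * d3 = 0 ∧ a3 * d2 = 0) ∧
        (2 * t = S.n → a2 * d3 + S.lam * (a3 * d2) = 0))
    ∧ (z * u = 0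
      ↔ (1 - 2 * b1) * d1 = 0 ∧ b2 * d2 + b3 * d3 = 0 ∧
        (2 * t ≠ S.n → d1 = 0 ∧ b2 * d3 = 0 ∧ b3 * d2 = 0) ∧
        (2 * t = S.n → b2 * d3 + S.lam * (b3 * d2) = 0))
    ∧ (y * v = 0
      ↔ (1 - 2 * a1) * e1 = 0 ∧ a2 * e2 + a3 * e3 = 0 ∧
        (2 * t ≠ S.n → e1 = 0 ∧ a2 * e3 = 0 ∧ a3 * e2 = 0) ∧
        (2 * t = S.n → a2 * e3 + S.lam * (a3 * e2) = 0))
    ∧ (z * v = 0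
      ↔ (1 - 2 * b1) * e1 = 0 ∧ b2 * e2 + b3 * e3 = 0 ∧
        (2 * t ≠ S.n → e1 = 0 ∧ b2 * e3 = 0 ∧ b3 * e2 = 0) ∧
        (2 * t = S.n → b2 * e3 + S.lam * (b3 * e2) = 0)) := by
  subst hy hz hu hv
  have h := stmt7_general S.suzukiRelations hs1 htodd (by omega) hP hQ hR hT
  exact ⟨h .., h .., h .., h ..⟩
end
end
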